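/- arXiv:math/0606451 — 19 statements merged into one kernel-verified Lean document; each statement's English description precedes it below -/
import Mathlib

section
/- Let n ≥ 3 and let c₁, …, cₙ be nonzero integers such that cᵢ > 0 for some i and cⱼ < 0 for some j. Then for every 2-coloring χ : ℤ⁺ → {0,1} there exist positive integers x₁, …, xₙ (not necessarily distinct) with c₁x₁ + c₂x₂ + ⋯ + cₙxₙ = 0 and χ(x₁) = χ(x₂) = ⋯ = χ(xₙ). -/
theorem rado_scale (a b c N : ℕ) (ha : 0 < a) (hb : 0 < b) (hc : 0 < c) (hN : 0 < N)
    (χ : ℕ → Fin 2) (k : Fin 2) (h : ∀ t, 0 < t → χ (N * t) = k) :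
    ∃ x y z : ℕ, 0 < x ∧ 0 < y ∧ 0 < z ∧ a * x + b * y = c * z ∧ χ x = χ y ∧ χ y = χ z := by
  refine ⟨N * (b * c), N * (a * c), N * (2 * a * b), by positivity, by positivity, by positivity,
    by ring, ?_, ?_⟩
  · rw [h _ (by positivity), h _ (by positivity)]
  · rw [h _ (by positivity), h _ (by positivity)]

theorem rado_three (a b c : ℕ) (ha : 0 < a) (hb : 0 < b) (hc : 0 < c) (χ : ℕ → Fin 2) :
    ∃ x y z : ℕ, 0 < x ∧ 0 < y ∧ 0 < z ∧ a * x + b * y = c * z ∧ χ x = χ y ∧ χ y = χ z := by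
  by_contra hno
  have key : ∀ x y z : ℕ, 0 < x → 0 < y → 0 < z → a * x + b * y = c * z →
      χ x = χ y → χ y ≠ χ z := fun x y z hx hy hz h1 h2 h3 =>
    hno ⟨x, y, z, hx, hy, hz, h1, h2, h3⟩
  have hsw : ∃ i, 0 < i ∧ χ (b * c * i) ≠ χ (b * c * (i + 1)) := by
    by_contra hcon
    push Not at hcon
    refine hno (rado_scale a b c (b * c) ha hb hc (by positivity) χ (χ (b * c * 1)) ?_)
    intro t ht
    induction t, ht using Nat.le_induction with
    | base => rfl
    | succ m hm ih => rw [← hcon m hm, ih]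
  obtain ⟨i, hi, hne⟩ := hsw
  have hup : ∀ k, 0 < k → χ (a * c * k) = χ (b * c * (i + 1)) →
      χ (a * c * (k + 1)) = χ (b * c * (i + 1)) := by
    intro k hk h
    have h1 := key (b * c * (i + 1)) (a * c * k) (a * b * (i + 1) + a * b * k)
      (by positivity) (by positivity) (by positivity) (by ring) h.symm
    have h2 := key (b * c * i) (a * c * (k + 1)) (a * b * (i + 1) + a * b * k)
      (by positivity) (by positivity) (by positivity) (by ring)
    generalize χ (a * c * (k + 1)) = p at *
    generalize χ (a * c * k) = q at *
    generalize χ (b * c * (i + 1)) = r at *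
    generalize χ (b * c * i) = s at *
    generalize χ (a * b * (i + 1) + a * b * k) = u at *
    omega
  by_cases hex : ∃ k, 0 < k ∧ χ (a * c * k) = χ (b * c * (i + 1))
  · obtain ⟨k, hk, h⟩ := hex
    have hall : ∀ m, k ≤ m → χ (a * c * m) = χ (b * c * (i + 1)) := by
      intro m hm
      induction m, hm using Nat.le_induction with
      | base => exact h
      | succ m hm ih => exact hup m (by omega) ih
    refine hno (rado_scale a b c (a * c * k) ha hb hc (by positivity) χ
      (χ (b * c * (i + 1))) (fun t ht => ?_))
    rw [mul_assoc (a * c)]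
    exact hall _ (Nat.le_mul_of_pos_right k ht)
  · push Not at hex
    refine hno (rado_scale a b c (a * c) ha hb hc (by positivity) χ (χ (b * c * i))
      (fun t ht => ?_))
    have := hex t ht
    omega

theorem rado_aux (n : ℕ) (c : Fin n → ℤ)
    (hc : ∀ i, c i ≠ 0) (hpos : ∃ i j, i ≠ j ∧ 0 < c i ∧ 0 < c j) (hneg : ∃ j, c j < 0)
    (χ : ℕ → Fin 2) :
    ∃ x : Fin n → ℕ, (∀ i, 0 < x i) ∧
      (∑ i, c i * (x i : ℤ)) = 0 ∧
      (∀ i j, χ (x i) = χ (x j)) := by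
  obtain ⟨p, q, hpq, hp, hq⟩ := hpos
  obtain ⟨r, hr⟩ := hneg
  have hB : 0 < ∑ i, (if 0 < c i ∧ i ≠ p then c i else 0) := by
    refine Finset.sum_pos' (fun i _ => ?_) ⟨q, Finset.mem_univ _, ?_⟩
    · split_ifs with h
      · exact h.1.le
      · exact le_rfl
    · rw [if_pos ⟨hq, hpq.symm⟩]; exact hq
  have hC : 0 < ∑ i, (if c i < 0 then - c i else 0) := by
    refine Finset.sum_pos' (fun i _ => ?_) ⟨r, Finset.mem_univ _, ?_⟩
    · split_ifs with h <;> omega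
    · rw [if_pos hr]; omega
  have hA : c p = ∑ i, (if i = p then c i else 0) := by simp
  obtain ⟨x, y, z, hx, hy, hz, h1, h2, h3⟩ := rado_three (c p).toNat
    (∑ i, (if 0 < c i ∧ i ≠ p then c i else 0)).toNat
    (∑ i, (if c i < 0 then - c i else 0)).toNat (by omega) (by omega) (by omega) χ
  refine ⟨fun i => if c i < 0 then z else if i = p then x else y, fun i => ?_, ?_, ?_⟩
  · dsimp only; split_ifs <;> assumption
  · have h4 := congrArg (fun t : ℕ => (t : ℤ)) h1
    simp only [Nat.cast_add, Nat.cast_mul] at h4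
    rw [Int.toNat_of_nonneg hp.le, Int.toNat_of_nonneg hB.le, Int.toNat_of_nonneg hC.le, hA,
      Finset.sum_mul, Finset.sum_mul, Finset.sum_mul, ← Finset.sum_add_distrib, ← sub_eq_zero,
      ← Finset.sum_sub_distrib] at h4
    refine Eq.trans ?_ h4
    refine Finset.sum_congr rfl (fun i _ => ?_)
    have := hc i
    by_cases hi : c i < 0
    · have h5 : i ≠ p := by rintro rfl; omega
      have h6 : ¬ 0 < c i := by omega
      simp [hi, h5, h6]
    · have h6 : 0 < c i := by omega
      by_cases h5 : i = p
      · subst h5; simp [hi]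
      · simp [hi, h5, h6]
  · intro i j
    dsimp only
    split_ifs <;> simp [h2, h3]

/-- Rado's two-color theorem: any linear homogeneous equation with at least 3
variables, nonzero integer coefficients, and coefficients of both signs admits,
under every 2-coloring of the positive integers, a monochromatic solution. -/
theorem rado_two_color (n : ℕ) (hn : 3 ≤ n) (c : Fin n → ℤ)
    (hc : ∀ i, c i ≠ 0) (hpos : ∃ i, 0 < c i) (hneg : ∃ j, c j < 0)
    (χ : ℕ → Fin 2) :
    ∃ x : Fin n → ℕ, (∀ i, 0 < x i) ∧
      (∑ i, c i * (x i : ℤ)) = 0 ∧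
      (∀ i j, χ (x i) = χ (x j)) := by
  by_cases h2 : ∃ i j, i ≠ j ∧ 0 < c i ∧ 0 < c j
  · exact rado_aux n c hc h2 hneg χ
  · have h3 : ∃ i j, i ≠ j ∧ c i < 0 ∧ c j < 0 := by
      obtain ⟨p, hp⟩ := hpos
      have hcard : 1 < (Finset.univ.erase p).card := by
        rw [Finset.card_erase_of_mem (Finset.mem_univ _)]; simp; omega
      obtain ⟨i, hi, j, hj, hij⟩ := Finset.one_lt_card.1 hcard
      push Not at h2
      have hi' := h2 p i (Finset.ne_of_mem_erase hi).symm hp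
      have hj' := h2 p j (Finset.ne_of_mem_erase hj).symm hp
      exact ⟨i, j, hij, lt_of_le_of_ne hi' (hc i), lt_of_le_of_ne hj' (hc j)⟩
    obtain ⟨i, j, hij, hi, hj⟩ := h3
    obtain ⟨p, hp⟩ := hpos
    obtain ⟨x, hx, hs, hm⟩ := rado_aux n (fun i => - c i) (fun i => neg_ne_zero.2 (hc i))
      ⟨i, j, hij, by simpa using hi, by simpa using hj⟩ ⟨p, by simpa using hp⟩ χ
    refine ⟨x, hx, ?_, hm⟩
    simpa [Finset.sum_neg_distrib] using hs
end

section
/- Let E₀ be the equation c₁x₁ + ⋯ + cₙxₙ = 0 and E₁ be the equation d₁y₁ + ⋯ + dₘyₘ = 0, where n, m ≥ 3, all cᵢ and dⱼ are nonzero integers, and each of the coefficient lists (c₁,…,cₙ) and (d₁,…,dₘ) contains both a positive and a negative entry. Then for every 2-coloring χ : ℤ⁺ → {0,1} there exist either positive integers x₁,…,xₙ with c₁x₁ + ⋯ + cₙxₙ = 0 and χ(x₁) = ⋯ = χ(xₙ) = 0, or positive integers y₁,…,yₘ with d₁y₁ + ⋯ + dₘyₘ = 0 and χ(y₁) = ⋯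 = χ(yₘ) = 1. -/
structure RSys (a b a' b' : ℤ) (Rd Bl : ℤ → Prop) (T : ℤ) : Prop where
  ha : 0 < a
  hb : 0 < b
  ha' : 0 < a'
  hb' : 0 < b'
  cop : IsCoprime a b
  cop' : IsCoprime a' b'
  hT : 0 < T
  posR : ∀ x, Rd x → 0 < x
  posB : ∀ x, Bl x → 0 < x
  tot : ∀ x, 0 < x → Rd x ∨ Bl x
  disj : ∀ x, Rd x → Bl x → False
  cvR : ∀ P S W, (a + b) * W = a * P + b * S → Rd P → Rd S → Rd W
  cvB : ∀ P S W, (a' + b') * W = a' * P + b' * S → Bl P → Bl S → Bl W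
  noR : ∀ k, 0 < k → ¬ ∀ i, 1 ≤ i → i ≤ T → Rd (k * i)
  noB : ∀ k, 0 < k → ¬ ∀ i, 1 ≤ i → i ≤ T → Bl (k * i)

theorem RSys.symm {a b a' b' : ℤ} {Rd Bl : ℤ → Prop} {T : ℤ} (h : RSys a b a' b' Rd Bl T) :
    RSys a' b' a b Bl Rd T :=
  ⟨h.ha', h.hb', h.ha, h.hb, h.cop', h.cop, h.hT, h.posB, h.posR, fun x hx => (h.tot x hx).symm,
    fun x p q => h.disj x q p, h.cvB, h.cvR, h.noB, h.noR⟩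

theorem RSys.scale {a b a' b' : ℤ} {Rd Bl : ℤ → Prop} {T : ℤ} (h : RSys a b a' b' Rd Bl T)
    (D : ℤ) (hD : 0 < D) :
    RSys a b a' b' (fun x => Rd (D * x)) (fun x => Bl (D * x)) T where
  ha := h.ha
  hb := h.hb
  ha' := h.ha'
  hb' := h.hb'
  cop := h.cop
  cop' := h.cop'
  hT := h.hT
  posR x hx := pos_of_mul_pos_right (h.posR _ hx) hD.le
  posB x hx := pos_of_mul_pos_right (h.posB _ hx) hD.le
  tot x hx := h.tot _ (mul_pos hD hx)
  disj x p q := h.disj _ p q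
  cvR P S W e p q := h.cvR _ _ _ (by linear_combination D * e) p q
  cvB P S W e p q := h.cvB _ _ _ (by linear_combination D * e) p q
  noR k hk H := h.noR (D * k) (mul_pos hD hk) (fun i h1 h2 => by
    have := H i h1 h2; rwa [mul_assoc])
  noB k hk H := h.noB (D * k) (mul_pos hD hk) (fun i h1 h2 => by
    have := H i h1 h2; rwa [mul_assoc])

theorem RSys.ext {a b a' b' : ℤ} {Rd Bl : ℤ → Prop} {T : ℤ} (h : RSys a b a' b' Rd Bl T)
    (X Y W : ℤ) (e : (a + b) * W = a * X + b * Y) (hY : Rd Y) (hW : Bl W) (hX : 0 < X) : Bl X := by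
  rcases h.tot X hX with hr | hb
  · exact (h.disj W (h.cvR _ _ _ e hr hY) hW).elim
  · exact hb

theorem double_aux (a b : ℤ) (B : ℤ → Prop)
    (cv : ∀ P S W, (a + b) * W = a * P + b * S → B P → B S → B W) (j : ℕ) :
    ∀ U E : ℤ, B U → B (U + E * (a + b) ^ (2 * j)) → ∀ i : ℤ, 0 ≤ i → i ≤ 2 ^ j →
      B (U + E * (a * b) ^ j * i) := by
  induction j with
  | zero =>
    intro U E hU hV i h0 h1
    have : i = 0 ∨ i = 1 := by simp at h1; omega
    rcases this with rfl | rfl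
    · simpa using hU
    · simpa using hV
  | succ j ih =>
    intro U E hU hV i h0 h1
    have key := ih U (E * (a + b) ^ 2) hU (by
      have e : U + E * (a + b) ^ 2 * (a + b) ^ (2 * j) = U + E * (a + b) ^ (2 * (j + 1)) := by ring
      rwa [e])
    have h2 : i ≤ 2 * 2 ^ j := by rw [pow_succ] at h1; linarith
    set X := (a * b) ^ j with hX
    have p1 := key (i / 2) (by omega) (by omega)
    have p2 := key (i - i / 2) (by omega) (by omega)
    have q1 : B (U + E * (a + b) * a * X * (i / 2)) := cv _ _ _ (by ring) p1 hU
    have q2 : B (U + E * (a + b) * b * X * (i - i / 2)) := cv _ _ _ (by ring) hU p2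
    refine cv _ _ _ ?_ q2 q1
    rw [pow_succ, ← hX]; ring

/-- all of `r + i` are blue, once a long run is. -/
theorem RSys.run {a b a' b' : ℤ} {Rd Bl : ℤ → Prop} {T : ℤ} (h : RSys a b a' b' Rd Bl T)
    (r : ℤ) (hr : Rd r) (n : ℤ) (hn : a + 3 * a * (a + b) * (a' + b') ≤ n)
    (H : ∀ i, 1 ≤ i → i ≤ n → Bl (r + i)) : Bl (r + (n + 1)) := by
  obtain ⟨x, y, hxy⟩ := h.cop'
  have ha := h.ha
  have hb := h.hb
  have ha' := h.ha'
  have hb' := h.hb'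
  have hr0 := h.posR r hr
  obtain ⟨g, hg⟩ : ∃ g, g = a + b := ⟨_, rfl⟩
  have hg0 : 0 < g := by omega
  obtain ⟨N, hN⟩ : ∃ N, N = n + 1 := ⟨_, rfl⟩
  rw [← hN]
  rw [← hg] at hn
  have ht0 := Int.emod_nonneg (-N * y) hg0.ne'
  have ht1 := Int.emod_lt_of_pos (-N * y) hg0
  have htq := Int.mul_ediv_add_emod (-N * y) g
  have hu0 := Int.emod_nonneg (-N * x) hg0.ne'
  have hu1 := Int.emod_lt_of_pos (-N * x) hg0
  have huq := Int.mul_ediv_add_emod (-N * x) g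
  obtain ⟨t, ht⟩ : ∃ t, t = (-N * y) % g + g := ⟨_, rfl⟩
  obtain ⟨u, hu⟩ : ∃ u, u = (-N * x) % g + 2 * g := ⟨_, rfl⟩
  obtain ⟨i, hi⟩ : ∃ i, N + b' * t + a' * u = g * i :=
    ⟨b' - b' * ((-N * y) / g) + 2 * a' - a' * ((-N * x) / g), by
      rw [ht, hu]; linear_combination (-N) * hxy + b' * htq + a' * huq⟩
  have t1 : 1 ≤ t := by omega
  have t2 : t ≤ 2 * g := by omega
  have u1 : t + 1 ≤ u := by omega
  have u2 : u ≤ 3 * g := by omega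
  clear ht hu huq hu0 hu1 htq ht0 ht1
  have e1 : b' * u ≤ b' * (3 * g) := mul_le_mul_of_nonneg_left u2 hb'.le
  have e2 : a' * u ≤ a' * (3 * g) := mul_le_mul_of_nonneg_left u2 ha'.le
  have e3 : a' * t ≤ a' * (3 * g) := mul_le_mul_of_nonneg_left (by omega) ha'.le
  have e4 : b' * t ≤ b' * (3 * g) := mul_le_mul_of_nonneg_left (by omega) hb'.le
  have e5 : 0 < a' * t := by positivity
  have e6 : 0 < b' * t := by positivity
  have e7 : b' * (t + 1) ≤ b' * u := mul_le_mul_of_nonneg_left u1 hb'.le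
  have e8 : 1 * (3 * g * (a' + b')) ≤ a * (3 * g * (a' + b')) :=
    mul_le_mul_of_nonneg_right (by omega) (by positivity)
  have e9 : 0 < a' * (3 * g) := by positivity
  have e10 : 0 < b' * (3 * g) := by positivity
  have hn0 : 3 * g * (a' + b') < n := by nlinarith
  have hN0 : 0 < N := by nlinarith
  have hi0 : 0 < i := by
    have : 0 < g * i := by rw [← hi]; have : 0 < a' * u := mul_pos ha' (by omega)
                           linarith
    exact pos_of_mul_pos_right this hg0.le
  have hai : a * i ≤ n := by
    have h1 : g * (a * i) ≤ g * n := by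
      have : a * (N + b' * t + a' * u) ≤ a * (n + 1 + 3 * g * (a' + b')) :=
        mul_le_mul_of_nonneg_left (by linarith) ha.le
      have h3 : 1 * n ≤ b * n := mul_le_mul_of_nonneg_right (by omega) (by linarith)
      calc g * (a * i) = a * (N + b' * t + a' * u) := by rw [hi]; ring
        _ ≤ a * (n + 1 + 3 * g * (a' + b')) := this
        _ ≤ g * n := by rw [hg] at hn ⊢; nlinarith
    exact le_of_mul_le_mul_left h1 hg0
  have p2 : Bl (r + g * i) := by
    refine h.ext _ r (r + a * i) ?_ hr (H _ (by nlinarith) hai) (by positivity)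
    rw [hg]; ring
  have p1 : Bl (r + (N + b' * t)) := by
    refine h.cvB (r + (N + b' * t - b' * u)) (r + g * i) _ ?_ (H _ ?_ ?_) p2
    · rw [← hi]; ring
    · linarith
    · linarith
  refine h.cvB (r + (N + b' * t)) (r + (N - a' * t)) _ (by ring) p1 (H _ ?_ ?_)
  · linarith
  · linarith

theorem RSys.run_all {a b a' b' : ℤ} {Rd Bl : ℤ → Prop} {T : ℤ} (h : RSys a b a' b' Rd Bl T)
    (r : ℤ) (hr : Rd r) (n : ℤ) (hn : a + 3 * a * (a + b) * (a' + b') ≤ n)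
    (H : ∀ i, 1 ≤ i → i ≤ n → Bl (r + i)) : False := by
  have hr0 := h.posR r hr
  have key : ∀ d : ℕ, ∀ i, 1 ≤ i → i ≤ n + d → Bl (r + i) := by
    intro d
    induction d with
    | zero => simpa using H
    | succ d ih =>
      intro i h1 h2
      by_cases h3 : i ≤ n + d
      · exact ih i h1 h3
      · have : i = n + d + 1 := by push_cast at h2; omega
        rw [this]
        exact h.run r hr (n + d) (by omega) ih
  refine h.noB (2 * r) (by omega) (fun i h1 h2 => ?_)
  have e : 2 * r * i = r + r * (2 * i - 1) := by ring
  rw [e]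
  have h4 : 1 ≤ r * (2 * i - 1) := by nlinarith
  exact key (r * (2 * i - 1) - n).toNat _ h4 (by omega)

theorem RSys.long {a b a' b' : ℤ} {Rd Bl : ℤ → Prop} {T : ℤ} (h : RSys a b a' b' Rd Bl T)
    (n t : ℤ) (hn : a + 3 * a * (a + b) * (a' + b') ≤ n) (hT : T ≤ n) (ht : 0 ≤ t)
    (H : ∀ i, 1 ≤ i → i ≤ n → Bl (t + i)) : False := by
  lift t to ℕ using ht
  induction t generalizing n with
  | zero =>
    refine h.noB 1 one_pos (fun i h1 h2 => ?_)
    have := H i h1 (by omega)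
    simpa using this
  | succ t ih =>
    rcases h.tot ((t + 1 : ℕ) : ℤ) (by positivity) with hr | hb
    · exact h.run_all _ hr n hn H
    · refine ih (n + 1) (by omega) (by omega) (fun i h1 h2 => ?_)
      by_cases h3 : i = 1
      · subst h3; simpa using hb
      · have := H (i - 1) (by omega) (by omega)
        have e : ((t + 1 : ℕ) : ℤ) + (i - 1) = t + i := by push_cast; ring
        rwa [e] at this

theorem RSys.main {a b a' b' : ℤ} {Rd Bl : ℤ → Prop} {T : ℤ} (h : RSys a b a' b' Rd Bl T) :
    ∃ M K : ℤ, 0 < M ∧ 0 < K ∧ ∀ k s : ℤ, 0 < k → 0 < s →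
      Bl (k * K * (M * s)) → Rd (k * K * (M * s + 1)) → False := by
  have ha := h.ha
  have hb := h.hb
  have ha' := h.ha'
  have hb' := h.hb'
  have hT := h.hT
  obtain ⟨n, hn⟩ : ∃ n, n = a + 3 * a * (a + b) * (a' + b') + T := ⟨_, rfl⟩
  have hn0 : 0 < n := by rw [hn]; positivity
  have h0 : 0 < 3 * a * (a + b) * (a' + b') := by positivity
  obtain ⟨j, hj⟩ : ∃ j : ℕ, n ≤ 2 ^ j := by
    refine ⟨n.toNat, ?_⟩
    have : n.toNat < 2 ^ n.toNat := Nat.lt_two_pow_self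
    have h2 : (n.toNat : ℤ) < 2 ^ n.toNat := by exact_mod_cast this
    omega
  obtain ⟨X, hX⟩ : ∃ X, X = (a' * b') ^ j := ⟨_, rfl⟩
  obtain ⟨C, hC⟩ : ∃ C, C = (a' + b') ^ (2 * j) := ⟨_, rfl⟩
  have hX0 : 0 < X := by rw [hX]; positivity
  have hC0 : 0 < C := by rw [hC]; positivity
  refine ⟨2 * b * X, a * C, by positivity, by positivity, fun k s hk hs hW hY => ?_⟩
  have hV : Bl (k * C * (a * (2 * b * X * s) - b)) := by
    refine h.ext _ _ _ ?_ hY hW ?_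
    · ring
    · have h1 : 1 ≤ a * (X * s) := by
        have : 0 < a * (X * s) := by positivity
        omega
      have h2 : 0 < a * (2 * b * X * s) - b := by nlinarith
      positivity
  have D := double_aux a' b' Bl h.cvB j (k * (a * C) * (2 * b * X * s)) (-(b * k)) hW (by
    rw [← hC]; convert hV using 1; ring)
  rw [← hX] at D
  have hs' := h.scale (b * k * X) (by positivity)
  have pos : 0 < 2 * a * C * s - n := by
    have := D n hn0.le hj
    have := h.posB _ this
    have e : k * (a * C) * (2 * b * X * s) + -(b * k) * X * n = (b * k * X) * (2 * a * C * s - n) := by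
      ring
    rw [e] at this
    exact pos_of_mul_pos_right this (by positivity)
  refine hs'.long n (2 * a * C * s - n) (by omega) (by omega) pos.le (fun i h1 h2 => ?_)
  have := D (n - i) (by omega) (by omega)
  convert this using 1
  ring

theorem switch_aux (B : ℤ → Prop) (M K : ℤ) (hM : 0 < M) (hK : 0 < K)
    (H : ∀ k s : ℤ, 0 < k → 0 < s → (B (k * K * (M * s)) ↔ B (k * K * (M * s + 1)))) (d : ℕ) :
    ∃ L, 0 < L ∧
      (∀ k s : ℤ, 0 < k → 0 < s → (B (k * L * ((M + d) * s)) ↔ B (k * L * ((M + d) * s + 1)))) ∧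
      ∀ e : ℤ, 0 ≤ e → e ≤ d → ∀ k, 0 < k → (B (k * L * M) ↔ B (k * L * (M + e))) := by
  induction d with
  | zero =>
    refine ⟨K, hK, by simpa using H, fun e h0 h1 k hk => ?_⟩
    have : e = 0 := by simp at h1; omega
    simp [this]
  | succ d ih =>
    obtain ⟨L, hL, h1, h2⟩ := ih
    obtain ⟨m, hm⟩ : ∃ m, m = M + d := ⟨_, rfl⟩
    have hm0 : 0 < m := by omega
    rw [← hm] at h1
    refine ⟨L * m ^ 2, by positivity, ?_, ?_⟩
    · intro k s hk hs
      have e1 := h1 (k * m * (m + 1)) s (by positivity) hs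
      have e2 := h1 (k * m) (m * s + s + 1) (by positivity) (by positivity)
      have r1 : k * m * (m + 1) * L * (m * s) = k * (L * m ^ 2) * ((M + (d + 1 : ℕ)) * s) := by
        rw [show M + ((d + 1 : ℕ) : ℤ) = m + 1 by push_cast; omega]; ring
      have r2 : k * m * L * (m * (m * s + s + 1)) =
          k * (L * m ^ 2) * ((M + (d + 1 : ℕ)) * s + 1) := by
        rw [show M + ((d + 1 : ℕ) : ℤ) = m + 1 by push_cast; omega]; ring
      have r3 : k * m * (m + 1) * L * (m * s + 1) = k * m * L * (m * (m * s + s + 1) + 1) := by ring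
      rw [r1, r3] at e1
      rw [r2] at e2
      exact e1.trans e2.symm
    · intro e e0 e1 k hk
      have a1 : ∀ e : ℤ, 0 ≤ e → e ≤ d →
          (B (k * (L * m ^ 2) * M) ↔ B (k * (L * m ^ 2) * (M + e))) := by
        intro e e0 e1
        have := h2 e e0 e1 (k * m ^ 2) (by positivity)
        rwa [show k * m ^ 2 * L = k * (L * m ^ 2) by ring] at this
      by_cases h3 : e ≤ d
      · exact a1 e e0 h3
      · have he : e = d + 1 := by push_cast at e1; omega
        have a2 := a1 d (by positivity) le_rfl
        have a3 := h1 (k * m ^ 2) 1 (by positivity) one_pos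
        rw [show k * m ^ 2 * L = k * (L * m ^ 2) by ring, mul_one] at a3
        rw [he, ← add_assoc, ← hm] at *
        exact a2.trans a3

theorem RSys.false {a b a' b' : ℤ} {Rd Bl : ℤ → Prop} {T : ℤ} (h : RSys a b a' b' Rd Bl T) :
    False := by
  obtain ⟨M, K, hM, hK, h1⟩ := h.main
  obtain ⟨M', K', hM', hK', h2⟩ := h.symm.main
  have hT := h.hT
  obtain ⟨L, hL, -, h3⟩ := switch_aux Bl (M * M') (K * K') (by positivity) (by positivity) (by
    intro k s hk hs
    constructor
    · intro hB
      rcases h.tot (k * (K * K') * (M * M' * s + 1)) (by positivity) with hr | hb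
      · exact (h1 (k * K') (M' * s) (by positivity) (by positivity)
          (by convert hB using 1; ring) (by convert hr using 1; ring)).elim
      · exact hb
    · intro hB
      rcases h.tot (k * (K * K') * (M * M' * s)) (by positivity) with hr | hb
      · exact (h2 (k * K) (M * s) (by positivity) (by positivity)
          (by convert hr using 1; ring) (by convert hB using 1; ring)).elim
      · exact hb) (M * M' * T).toNat
  have hMM : 0 < M * M' := by positivity
  have h4 : ∀ i, 1 ≤ i → i ≤ T → (Bl (1 * L * (M * M')) ↔ Bl (L * (M * M') * i)) := by
    intro i i1 i2
    have e1 : M * M' * 1 ≤ M * M' * i := mul_le_mul_of_nonneg_left i1 hMM.le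
    have e2 : M * M' * i ≤ M * M' * T := mul_le_mul_of_nonneg_left i2 hMM.le
    have := h3 (M * M' * i - M * M') (by linarith) (by omega) 1 one_pos
    rwa [show 1 * L * (M * M' + (M * M' * i - M * M')) = L * (M * M') * i by ring] at this
  by_cases hB : Bl (1 * L * (M * M'))
  · exact h.noB (L * (M * M')) (by positivity) (fun i i1 i2 => (h4 i i1 i2).1 hB)
  · exact h.noR (L * (M * M')) (by positivity) (fun i i1 i2 =>
      (h.tot _ (by positivity)).resolve_right (fun hh => hB ((h4 i i1 i2).2 hh)))

theorem conv_aux (a b e a' b' e' : ℤ) (ha : 0 < a) (hb : 0 < b) (he : 0 < e)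
    (ha' : 0 < a') (hb' : 0 < b') (he' : 0 < e') (R B : ℤ → Prop)
    (posR : ∀ x, R x → 0 < x) (tot : ∀ x, 0 < x → R x ∨ B x)
    (hR : ∀ x y z, a * x + b * y = e * z → R x → R y → R z → False)
    (hB : ∀ x y z, a' * x + b' * y = e' * z → B x → B y → B z → False)
    (P S W N : ℤ) (hN : N = e * e' * (a + b) * (a' + b'))
    (hW : (a + b) * W = a * P + b * S)
    (hP : R (N * P)) (hS : R (N * S)) : R (N * W) := by
  have hN0 : 0 < N := by rw [hN]; positivity
  have P0 : 0 < P := pos_of_mul_pos_right (posR _ hP) hN0.le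
  have S0 : 0 < S := pos_of_mul_pos_right (posR _ hS) hN0.le
  have W0 : 0 < W := by
    have : 0 < (a + b) * W := by rw [hW]; positivity
    exact pos_of_mul_pos_right this (by positivity)
  rcases tot (N * W) (by positivity) with h | h
  · exact h
  exfalso
  have hA : B (e' * (a + b) * (a' + b') * (a + b) * W) := by
    refine (tot _ (by positivity)).resolve_left fun hh => hR _ _ _ ?_ hP hS hh
    rw [hN]; linear_combination (-(e * e' * (a + b) * (a' + b'))) * hW
  have hQ : R (e' * (a + b) * e' * (a + b) * W) := by
    refine (tot _ (by positivity)).resolve_right fun hh => hB _ _ _ ?_ hh hh hA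
    ring
  have hG : B (e * e' * (a + b) * e' * W) := by
    refine (tot _ (by positivity)).resolve_left fun hh => hR _ _ _ ?_ hh hh hQ
    ring
  refine hB _ _ _ ?_ hG hG h
  rw [hN]; ring

theorem three_false (a b e a' b' e' : ℤ) (ha : 0 < a) (hb : 0 < b) (he : 0 < e)
    (ha' : 0 < a') (hb' : 0 < b') (he' : 0 < e') (R B : ℤ → Prop)
    (posR : ∀ x, R x → 0 < x) (posB : ∀ x, B x → 0 < x) (tot : ∀ x, 0 < x → R x ∨ B x)
    (disj : ∀ x, R x → B x → False)
    (hR : ∀ x y z, a * x + b * y = e * z → R x → R y → R z → False)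
    (hB : ∀ x y z, a' * x + b' * y = e' * z → B x → B y → B z → False) : False := by
  obtain ⟨N, hN⟩ : ∃ N, N = e * e' * (a + b) * (a' + b') := ⟨_, rfl⟩
  have hN0 : 0 < N := by rw [hN]; positivity
  have red : ∀ a b : ℤ, 0 < a → 0 < b → ∃ g u v : ℤ, 0 < g ∧ 0 < u ∧ 0 < v ∧ IsCoprime u v ∧
      a = g * u ∧ b = g * v := by
    intro a b ha hb
    have hg : 0 < (Int.gcd a b : ℤ) := by
      exact_mod_cast Int.gcd_pos_of_ne_zero_left b ha.ne'
    obtain ⟨u, hu⟩ := Int.gcd_dvd_left a b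
    obtain ⟨v, hv⟩ := Int.gcd_dvd_right a b
    refine ⟨_, u, v, hg, ?_, ?_, ?_, hu, hv⟩
    · exact pos_of_mul_pos_right (hu ▸ ha) hg.le
    · exact pos_of_mul_pos_right (hv ▸ hb) hg.le
    · refine ⟨Int.gcdA a b, Int.gcdB a b, ?_⟩
      have := Int.gcd_eq_gcd_ab a b
      apply mul_left_cancel₀ hg.ne'
      linear_combination (-1 : ℤ) * this - Int.gcdA a b * hu - Int.gcdB a b * hv
  obtain ⟨g, u, v, g0, u0, v0, cuv, eu, ev⟩ := red a b ha hb
  obtain ⟨g', u', v', g0', u0', v0', cuv', eu', ev'⟩ := red a' b' ha' hb'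
  have S : RSys u v u' v' (fun x => R (N * x)) (fun x => B (N * x)) (a + b + e + a' + b' + e') := {
    ha := u0
    hb := v0
    ha' := u0'
    hb' := v0'
    cop := cuv
    cop' := cuv'
    hT := by positivity
    posR := fun x hx => pos_of_mul_pos_right (posR _ hx) hN0.le
    posB := fun x hx => pos_of_mul_pos_right (posB _ hx) hN0.le
    tot := fun x hx => tot _ (mul_pos hN0 hx)
    disj := fun x p q => disj _ p q
    cvR := fun P S W h p q => conv_aux a b e a' b' e' ha hb he ha' hb' he' R B posR tot hR hB
      P S W N hN (by rw [eu, ev]; linear_combination g * h) p q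
    cvB := fun P S W h p q => conv_aux a' b' e' a b e ha' hb' he' ha hb he B R posB
      (fun x hx => (tot x hx).symm) hB hR
      P S W N (by rw [hN]; ring) (by rw [eu', ev']; linear_combination g' * h) p q
    noR := fun k hk H => hR (N * (k * e)) (N * (k * e)) (N * (k * (a + b))) (by ring)
      (H e (by omega) (by omega)) (H e (by omega) (by omega)) (H (a + b) (by omega) (by omega))
    noB := fun k hk H => hB (N * (k * e')) (N * (k * e')) (N * (k * (a' + b'))) (by ring)
      (H e' (by omega) (by omega)) (H e' (by omega) (by omega))
      (H (a' + b') (by omega) (by omega)) }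
  exact S.false

theorem reduce_pos (n : ℕ) (c : Fin n → ℤ) (hc : ∀ i, c i ≠ 0) (hneg : ∃ i, c i < 0)
    (i j : Fin n) (hij : i ≠ j) (hi : 0 < c i) (hj : 0 < c j) :
    ∃ a b e : ℤ, 0 < a ∧ 0 < b ∧ 0 < e ∧ ∀ x y z : ℤ, a * x + b * y = e * z →
      ∃ v : Fin n → ℤ, (∀ k, v k = x ∨ v k = y ∨ v k = z) ∧ ∑ k, c k * v k = 0 := by
  classical
  obtain ⟨l, hl⟩ := hneg
  refine ⟨∑ k, if k = i then c k else 0, ∑ k, if k ≠ i ∧ 0 < c k then c k else 0,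
    ∑ k, if c k < 0 then - c k else 0, ?_, ?_, ?_, ?_⟩
  · simpa using hi
  · refine Finset.sum_pos' (fun k _ => ?_) ⟨j, Finset.mem_univ _, ?_⟩
    · split_ifs with h
      · exact h.2.le
      · exact le_rfl
    · rw [if_pos ⟨hij.symm, hj⟩]; exact hj
  · refine Finset.sum_pos' (fun k _ => ?_) ⟨l, Finset.mem_univ _, ?_⟩
    · split_ifs with h
      · omega
      · exact le_rfl
    · rw [if_pos hl]; omega
  · intro x y z h
    refine ⟨fun k => if k = i then x else if 0 < c k then y else z, fun k => ?_, ?_⟩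
    · dsimp only
      split_ifs <;> simp
    · rw [← sub_eq_zero, Finset.sum_mul, Finset.sum_mul, Finset.sum_mul, ← Finset.sum_add_distrib,
        ← Finset.sum_sub_distrib] at h
      refine Eq.trans (Finset.sum_congr rfl fun k _ => ?_) h
      have := hc k
      by_cases h1 : k = i
      · subst h1
        have : ¬ c k < 0 := by omega
        simp [this]
      · by_cases h2 : 0 < c k
        · have : ¬ c k < 0 := by omega
          simp [h1, h2, this]
        · have : c k < 0 := by omega
          simp [h1, h2, this]

theorem reduce (n : ℕ) (hn : 3 ≤ n) (c : Fin n → ℤ) (hc : ∀ i, c i ≠ 0)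
    (hpos : ∃ i, 0 < c i) (hneg : ∃ i, c i < 0) :
    ∃ a b e : ℤ, 0 < a ∧ 0 < b ∧ 0 < e ∧ ∀ x y z : ℤ, a * x + b * y = e * z →
      ∃ v : Fin n → ℤ, (∀ k, v k = x ∨ v k = y ∨ v k = z) ∧ ∑ k, c k * v k = 0 := by
  obtain ⟨p, hp⟩ := hpos
  obtain ⟨q, hq⟩ := hneg
  obtain ⟨r, hr⟩ : ∃ r : Fin n, r ∉ ({p, q} : Finset (Fin n)) := by
    by_contra! H
    have h1 : (Finset.univ : Finset (Fin n)) ⊆ {p, q} := fun x _ => H x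
    have h2 := Finset.card_le_card h1
    have h3 := Finset.card_le_two (a := p) (b := q)
    simp at h2
    omega
  simp only [Finset.mem_insert, Finset.mem_singleton, not_or] at hr
  rcases lt_or_gt_of_ne (hc r) with h | h
  · obtain ⟨a, b, e, h1, h2, h3, h4⟩ := reduce_pos n (fun i => - c i) (fun i => by simpa using hc i)
      ⟨p, by simpa using hp⟩ q r (Ne.symm hr.2) (by simpa using hq) (by simpa using h)
    refine ⟨a, b, e, h1, h2, h3, fun x y z hh => ?_⟩
    obtain ⟨v, v1, v2⟩ := h4 x y z hh
    refine ⟨v, v1, ?_⟩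
    simpa using v2
  · exact reduce_pos n c hc ⟨q, hq⟩ p r (Ne.symm hr.1) hp h



/-- Off-diagonal version of Rado's two-color theorem: for two linear homogeneous
equations, each with at least 3 variables, nonzero integer coefficients, and
coefficients of both signs, every 2-coloring of the positive integers admits a
solution to the first equation monochromatic of color 0 or a solution to the
second equation monochromatic of color 1. -/
theorem off_diagonal_rado_existence (n m : ℕ) (hn : 3 ≤ n) (hm : 3 ≤ m)
    (c : Fin n → ℤ) (d : Fin m → ℤ)
    (hc : ∀ i, c i ≠ 0) (hd : ∀ j, d j ≠ 0)
    (hcpos : ∃ i, 0 < c i) (hcneg : ∃ i, c i < 0)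
    (hdpos : ∃ j, 0 < d j) (hdneg : ∃ j, d j < 0)
    (χ : ℕ → Fin 2) :
    (∃ x : Fin n → ℕ, (∀ i, 0 < x i) ∧
      (∑ i, c i * (x i : ℤ)) = 0 ∧ (∀ i, χ (x i) = 0)) ∨
    (∃ y : Fin m → ℕ, (∀ j, 0 < y j) ∧
      (∑ j, d j * (y j : ℤ)) = 0 ∧ (∀ j, χ (y j) = 1)) := by
  obtain ⟨a, b, e, ha, hb, he, h1⟩ := reduce n hn c hc hcpos hcneg
  obtain ⟨a', b', e', ha', hb', he', h2⟩ := reduce m hm d hd hdpos hdneg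
  by_contra hcon
  rw [not_or] at hcon
  obtain ⟨n1, n2⟩ := hcon
  refine three_false a b e a' b' e' ha hb he ha' hb' he'
    (fun x => 0 < x ∧ χ x.toNat = 0) (fun x => 0 < x ∧ χ x.toNat = 1)
    (fun x h => h.1) (fun x h => h.1) ?_ ?_ ?_ ?_
  · intro x hx
    have : χ x.toNat = 0 ∨ χ x.toNat = 1 := by
      generalize χ x.toNat = w
      fin_cases w <;> simp
    exact this.imp (fun h => ⟨hx, h⟩) (fun h => ⟨hx, h⟩)
  · rintro x ⟨-, p⟩ ⟨-, q⟩
    rw [p] at q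
    exact absurd q (by decide)
  · intro x y z h hx hy hz
    obtain ⟨v, v1, v2⟩ := h1 x y z h
    have v3 : ∀ k, 0 < v k ∧ χ (v k).toNat = 0 := by
      intro k
      rcases v1 k with hh | hh | hh <;> rw [hh] <;> assumption
    refine n1 ⟨fun k => (v k).toNat, fun k => by have := (v3 k).1; dsimp only; omega, ?_, fun k => (v3 k).2⟩
    rw [← v2]
    refine Finset.sum_congr rfl fun k _ => ?_
    rw [Int.toNat_of_nonneg (v3 k).1.le]
  · intro x y z h hx hy hz
    obtain ⟨v, v1, v2⟩ := h2 x y z h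
    have v3 : ∀ k, 0 < v k ∧ χ (v k).toNat = 1 := by
      intro k
      rcases v1 k with hh | hh | hh <;> rw [hh] <;> assumption
    refine n2 ⟨fun k => (v k).toNat, fun k => by have := (v3 k).1; dsimp only; omega, ?_, fun k => (v3 k).2⟩
    rw [← v2]
    refine Finset.sum_congr rfl fun k _ => ?_
    rw [Int.toNat_of_nonneg (v3 k).1.le]
end

section
/- Let k, ℓ ≥ 2 and let b₁, …, b_{k−1} and c₁, …, c_{ℓ−1} be positive integers with b₁ = min(b₁,…,b_{k−1}) and c₁ = min(c₁,…,c_{ℓ−1}). Suppose t = b₁ = c₁, and set q = b₂ + ⋯ + b_{k−1} and s = c₂ + ⋯ + c_{ℓ−1}, with q ≥ s. Then there exists a 2-coloring χ : {1, …, t(t+q)(t+s)+s−1} → {0,1} such that there is no solution x₁,…,x_k in {1,…,t(t+q)(t+s)+s−1} to b₁x₁ + ⋯ + b_{k−1}x_{k−1} = x_k with χ(x₁) = ⋯ = χ(x_k) = 0, and no solution y₁,…,y_ℓ in {1,…,t(t+q)(t+s)+s−1} to c₁y₁ + ⋯ + c_{ℓ−1}y_{ℓ−1} = y_ℓ with χ(y₁)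 = ⋯ = χ(y_ℓ) = 1. Consequently RR(b₁x₁+⋯+b_{k−1}x_{k−1}=x_k, c₁y₁+⋯+c_{ℓ−1}y_{ℓ−1}=y_ℓ) ≥ t(t+q)(t+s)+s. -/
/-- Theorem 2.1: lower bound for the off-diagonal Rado number of the equations
`b₁x₁ + ⋯ + b_{k-1}x_{k-1} = x_k` and `c₁y₁ + ⋯ + c_{ℓ-1}y_{ℓ-1} = y_ℓ`,
where `b₁ = c₁ = t` are the minimal coefficients, `q = b₂ + ⋯ + b_{k-1}`,
`s = c₂ + ⋯ + c_{ℓ-1}`, and `q ≥ s`. There is a 2-coloring of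
`[1, t(t+q)(t+s)+s-1]` with no solution to the first equation monochromatic of
color 0 and no solution to the second monochromatic of color 1; consequently
`RR ≥ t(t+q)(t+s)+s`. -/
theorem off_diagonal_rado_lower_bound (k ℓ : ℕ) (hk : 2 ≤ k) (hl : 2 ≤ ℓ)
    (b : Fin (k - 1) → ℕ) (c : Fin (ℓ - 1) → ℕ)
    (hb : ∀ i, 0 < b i) (hc : ∀ i, 0 < c i)
    (hbmin : ∀ i, b ⟨0, by omega⟩ ≤ b i)
    (hcmin : ∀ i, c ⟨0, by omega⟩ ≤ c i)
    (t q s : ℕ)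
    (htb : t = b ⟨0, by omega⟩) (htc : t = c ⟨0, by omega⟩)
    (hq : q = ∑ i ∈ Finset.univ.erase ⟨0, by omega⟩, b i)
    (hs : s = ∑ i ∈ Finset.univ.erase ⟨0, by omega⟩, c i)
    (hqs : s ≤ q) :
    (∃ χ : ℕ → Fin 2,
      (¬ ∃ (x : Fin (k - 1) → ℕ) (xk : ℕ),
        (∀ i, x i ∈ Finset.Icc 1 (t * (t + q) * (t + s) + s - 1)) ∧
        xk ∈ Finset.Icc 1 (t * (t + q) * (t + s) + s - 1) ∧
        (∑ i, b i * x i) = xk ∧ (∀ i, χ (x i) = 0) ∧ χ xk = 0) ∧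
      (¬ ∃ (y : Fin (ℓ - 1) → ℕ) (yl : ℕ),
        (∀ i, y i ∈ Finset.Icc 1 (t * (t + q) * (t + s) + s - 1)) ∧
        yl ∈ Finset.Icc 1 (t * (t + q) * (t + s) + s - 1) ∧
        (∑ i, c i * y i) = yl ∧ (∀ i, χ (y i) = 1) ∧ χ yl = 1)) ∧
    (∀ M : ℕ, 0 < M →
      (∀ χ : ℕ → Fin 2,
        (∃ (x : Fin (k - 1) → ℕ) (xk : ℕ),
          (∀ i, x i ∈ Finset.Icc 1 M) ∧ xk ∈ Finset.Icc 1 M ∧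
          (∑ i, b i * x i) = xk ∧ (∀ i, χ (x i) = 0) ∧ χ xk = 0) ∨
        (∃ (y : Fin (ℓ - 1) → ℕ) (yl : ℕ),
          (∀ i, y i ∈ Finset.Icc 1 M) ∧ yl ∈ Finset.Icc 1 M ∧
          (∑ i, c i * y i) = yl ∧ (∀ i, χ (y i) = 1) ∧ χ yl = 1)) →
      t * (t + q) * (t + s) + s ≤ M) := by
  have hB : ∑ i, b i = t + q := by
    rw [hq, htb]
    exact (Finset.add_sum_erase _ _ (Finset.mem_univ _)).symm
  have hC : ∑ i, c i = t + s := by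
    rw [hs, htc]
    exact (Finset.add_sum_erase _ _ (Finset.mem_univ _)).symm
  have ht : 0 < t := htb ▸ hb _
  have hL : 0 < (t + s) * (t + q) := by positivity
  have hN : t * (t + q) * (t + s) = t * ((t + s) * (t + q)) := by ring
  rw [hN]
  generalize hLd : (t + s) * (t + q) = L at hL
  have key : ∃ χ : ℕ → Fin 2,
      (¬ ∃ (x : Fin (k - 1) → ℕ) (xk : ℕ),
        (∀ i, x i ∈ Finset.Icc 1 (t * L + s - 1)) ∧
        xk ∈ Finset.Icc 1 (t * L + s - 1) ∧
        (∑ i, b i * x i) = xk ∧ (∀ i, χ (x i) = 0) ∧ χ xk = 0) ∧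
      (¬ ∃ (y : Fin (ℓ - 1) → ℕ) (yl : ℕ),
        (∀ i, y i ∈ Finset.Icc 1 (t * L + s - 1)) ∧
        yl ∈ Finset.Icc 1 (t * L + s - 1) ∧
        (∑ i, c i * y i) = yl ∧ (∀ i, χ (y i) = 1) ∧ χ yl = 1) := by
    refine ⟨fun n => if t + s ≤ n ∧ n < L then 0 else 1, ?_, ?_⟩
    · rintro ⟨x, xk, hx, hxk, hsum, h0, hk0⟩
      have h0' : ∀ i, t + s ≤ x i := fun i => by
        have := h0 i
        by_contra hcon
        simp [hcon] at this
      have hk' : xk < L := by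
        by_contra hcon
        simp [hcon] at hk0
      have : ∑ i, b i * (t + s) ≤ ∑ i, b i * x i :=
        Finset.sum_le_sum fun i _ => Nat.mul_le_mul_left _ (h0' i)
      rw [← Finset.sum_mul, hB, hsum, mul_comm, hLd] at this
      omega
    · rintro ⟨y, yl, hy, hyl, hsum, h1, hl1⟩
      have h1' : ∀ i, ¬ (t + s ≤ y i ∧ y i < L) := fun i hcon => by
        have := h1 i
        simp [hcon] at this
      have hl' : ¬ (t + s ≤ yl ∧ yl < L) := fun hcon => by
        simp [hcon] at hl1
      have hy1 : ∀ i, 1 ≤ y i := fun i => (Finset.mem_Icc.1 (hy i)).1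
      have hlow : t + s ≤ yl := by
        rw [← hsum, ← hC]
        exact Finset.sum_le_sum fun i _ => Nat.le_mul_of_pos_right _ (hy1 i)
      rw [Finset.mem_Icc] at hyl
      by_cases hall : ∀ i, y i < t + s
      · have : ∑ i, c i * y i ≤ ∑ i, c i * (t + s - 1) :=
          Finset.sum_le_sum fun i _ => Nat.mul_le_mul_left _ (by have := hall i; omega)
        rw [← Finset.sum_mul, hC, hsum] at this
        have h2 : (t + s) * (t + s - 1) < (t + s) * (t + q) :=
          Nat.mul_lt_mul_of_pos_left (by omega) (by omega)
        omega
      · push Not at hall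
        obtain ⟨j, hj⟩ := hall
        have hjL : L ≤ y j := by have := h1' j; omega
        have e1 := Finset.add_sum_erase Finset.univ (fun i => c i * y i) (Finset.mem_univ j)
        have e2 := Finset.add_sum_erase Finset.univ c (Finset.mem_univ j)
        have e3 : ∑ i ∈ Finset.univ.erase j, c i ≤ ∑ i ∈ Finset.univ.erase j, c i * y i :=
          Finset.sum_le_sum fun i _ => Nat.le_mul_of_pos_right _ (hy1 i)
        have e4 : t ≤ c j := htc ▸ hcmin j
        have e5 : c j * L ≤ c j * y j := Nat.mul_le_mul_left _ hjL
        have e6 : c j + t * L ≤ t + c j * L := by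
          obtain ⟨d, hd⟩ := Nat.exists_eq_add_of_le e4
          rw [hd]
          nlinarith [Nat.zero_le d]
        have e7 : 0 < t * L := Nat.mul_pos ht hL
        omega
  refine ⟨key, fun M hM hall => ?_⟩
  obtain ⟨χ, hA, hB'⟩ := key
  by_contra hlt
  have hsub : Finset.Icc 1 M ⊆ Finset.Icc 1 (t * L + s - 1) :=
    Finset.Icc_subset_Icc_right (by omega)
  rcases hall χ with ⟨x, xk, h1, h2, h3⟩ | ⟨x, xk, h1, h2, h3⟩
  · exact hA ⟨x, xk, fun i => hsub (h1 i), hsub h2, h3⟩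
  · exact hB' ⟨x, xk, fun i => hsub (h1 i), hsub h2, h3⟩
end

section
/- Let t, q, s be positive integers with q ≥ s ≥ t, and let m = gcd(t,q)/gcd(t,q,s) (where gcd(t,q,s) = gcd(gcd(t,q),s)). Then there exists a 2-coloring χ : {1, …, t(t+q)(t+s)+ms−1} → {0,1} admitting no solution x, y, z in {1,…,t(t+q)(t+s)+ms−1} to tx + qy = z with χ(x) = χ(y) = χ(z) = 0 and no solution x, y, z to tx + sy = z with χ(x) = χ(y) = χ(z) = 1. Consequently RR_t(q,s) ≥ t(t+q)(t+s) + ms. -/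
/-- Theorem 2.2: for positive integers `q ≥ s ≥ t` and
`m = gcd(t,q)/gcd(gcd(t,q),s)`, there is a 2-coloring of
`[1, t(t+q)(t+s)+ms-1]` with no solution to `tx + qy = z` monochromatic of
color 0 and no solution to `tx + sy = z` monochromatic of color 1;
consequently `RR_t(q,s) ≥ t(t+q)(t+s)+ms`. -/
theorem off_diagonal_rado_lower_bound_gcd (t q s m : ℕ)
    (ht : 0 < t) (hts : t ≤ s) (hsq : s ≤ q)
    (hm : m = Nat.gcd t q / Nat.gcd (Nat.gcd t q) s) :
    (∃ χ : ℕ → Fin 2,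
      (¬ ∃ x y z : ℕ,
        x ∈ Finset.Icc 1 (t * (t + q) * (t + s) + m * s - 1) ∧
        y ∈ Finset.Icc 1 (t * (t + q) * (t + s) + m * s - 1) ∧
        z ∈ Finset.Icc 1 (t * (t + q) * (t + s) + m * s - 1) ∧
        t * x + q * y = z ∧ χ x = 0 ∧ χ y = 0 ∧ χ z = 0) ∧
      (¬ ∃ x y z : ℕ,
        x ∈ Finset.Icc 1 (t * (t + q) * (t + s) + m * s - 1) ∧
        y ∈ Finset.Icc 1 (t * (t + q) * (t + s) + m * s - 1) ∧
        z ∈ Finset.Icc 1 (t * (t + q) * (t + s) + m * s - 1) ∧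
        t * x + s * y = z ∧ χ x = 1 ∧ χ y = 1 ∧ χ z = 1)) ∧
    (∀ M : ℕ, 0 < M →
      (∀ χ : ℕ → Fin 2,
        (∃ x y z : ℕ, x ∈ Finset.Icc 1 M ∧ y ∈ Finset.Icc 1 M ∧
          z ∈ Finset.Icc 1 M ∧ t * x + q * y = z ∧
          χ x = 0 ∧ χ y = 0 ∧ χ z = 0) ∨
        (∃ x y z : ℕ, x ∈ Finset.Icc 1 M ∧ y ∈ Finset.Icc 1 M ∧
          z ∈ Finset.Icc 1 M ∧ t * x + s * y = z ∧
          χ x = 1 ∧ χ y = 1 ∧ χ z = 1)) →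
      t * (t + q) * (t + s) + m * s ≤ M) := by
  have key : (∃ χ : ℕ → Fin 2,
      (¬ ∃ x y z : ℕ,
        x ∈ Finset.Icc 1 (t * (t + q) * (t + s) + m * s - 1) ∧
        y ∈ Finset.Icc 1 (t * (t + q) * (t + s) + m * s - 1) ∧
        z ∈ Finset.Icc 1 (t * (t + q) * (t + s) + m * s - 1) ∧
        t * x + q * y = z ∧ χ x = 0 ∧ χ y = 0 ∧ χ z = 0) ∧
      (¬ ∃ x y z : ℕ,
        x ∈ Finset.Icc 1 (t * (t + q) * (t + s) + m * s - 1) ∧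
        y ∈ Finset.Icc 1 (t * (t + q) * (t + s) + m * s - 1) ∧
        z ∈ Finset.Icc 1 (t * (t + q) * (t + s) + m * s - 1) ∧
        t * x + s * y = z ∧ χ x = 1 ∧ χ y = 1 ∧ χ z = 1)) := by
    have hdt : Nat.gcd t q ∣ t := Nat.gcd_dvd_left t q
    have hdq : Nat.gcd t q ∣ q := Nat.gcd_dvd_right t q
    have hdpos : 0 < Nat.gcd t q := Nat.gcd_pos_of_pos_left q ht
    generalize Nat.gcd t q = d at *
    have hg : 0 < Nat.gcd d s := Nat.gcd_pos_of_pos_left s hdpos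
    have hmy : ∀ y, d ∣ s * y → m ∣ y := by
      intro y hy
      have h1 : Nat.Coprime (d / Nat.gcd d s) (s / Nat.gcd d s) :=
        Nat.coprime_div_gcd_div_gcd hg
      rw [hm]
      apply h1.dvd_of_dvd_mul_left
      obtain ⟨a, ha⟩ := Nat.gcd_dvd_left d s
      obtain ⟨b, hb⟩ := Nat.gcd_dvd_right d s
      generalize Nat.gcd d s = g at *
      subst ha hb
      rw [Nat.mul_div_cancel_left _ hg, Nat.mul_div_cancel_left _ hg]
      rw [mul_assoc] at hy
      exact Nat.dvd_of_mul_dvd_mul_left hg hy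
    have hmt : m ≤ t := by
      rw [hm]
      exact (Nat.div_le_self _ _).trans (Nat.le_of_dvd ht hdt)
    refine ⟨fun n => if n < t + s ∨ ((t + q) * (t + s) ≤ n ∧ d ∣ n) then 1 else 0, ?_, ?_⟩
    · rintro ⟨x, y, z, -, -, -, hz, cx, cy, cz⟩
      have e : ∀ n, (if n < t + s ∨ ((t + q) * (t + s) ≤ n ∧ d ∣ n) then (1 : Fin 2) else 0) = 0 →
          ¬ (n < t + s ∨ ((t + q) * (t + s) ≤ n ∧ d ∣ n)) := by
        intro n h h'
        rw [if_pos h'] at h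
        exact absurd h (by decide)
      have hx := e x cx
      have hy := e y cy
      have hz' := e z cz
      push Not at hx hy hz'
      refine hz'.2 ?_ ?_
      · subst hz
        nlinarith [Nat.mul_le_mul_left t hx.1, Nat.mul_le_mul_left q hy.1]
      · subst hz
        exact dvd_add (hdt.mul_right x) (hdq.mul_right y)
    · rintro ⟨x, y, z, hx1, hy1, hz1, hz, cx, cy, cz⟩
      rw [Finset.mem_Icc] at hx1 hy1 hz1
      have e : ∀ n, (if n < t + s ∨ ((t + q) * (t + s) ≤ n ∧ d ∣ n) then (1 : Fin 2) else 0) = 1 →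
          (n < t + s ∨ ((t + q) * (t + s) ≤ n ∧ d ∣ n)) := by
        intro n h
        by_contra h'
        rw [if_neg h'] at h
        exact absurd h (by decide)
      have hx := e x cx
      have hy := e y cy
      have hz' := e z cz
      have hzl : t + s ≤ z := by
        subst hz
        nlinarith [Nat.mul_le_mul_left t hx1.1, Nat.mul_le_mul_left s hy1.1]
      obtain ⟨hzL, hdz⟩ := hz'.resolve_left (by omega)
      have hmy' : m ≤ y := by
        apply Nat.le_of_dvd (by omega)
        apply hmy
        rw [← hz] at hdz
        exact (Nat.dvd_add_right (hdt.mul_right x)).1 hdz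
      have hzU : z < t * (t + q) * (t + s) + m * s := by omega
      rcases hx with hx | ⟨hx, -⟩
      · rcases hy with hy | ⟨hy, -⟩
        · have h1 : t * x ≤ t * (t + s - 1) := Nat.mul_le_mul_left t (by omega)
          have h2 : s * y ≤ s * (t + s - 1) := Nat.mul_le_mul_left s (by omega)
          have h3 : (t + s) * (t + s - 1) < (t + s) * (t + s) :=
            Nat.mul_lt_mul_of_pos_left (by omega) (by omega)
          have h4 : (t + s) * (t + s) ≤ (t + q) * (t + s) := Nat.mul_le_mul_right _ (by omega)
          have h5 : (t + s) * (t + s - 1) = t * (t + s - 1) + s * (t + s - 1) := add_mul _ _ _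
          omega
        · have h1 : s * ((t + q) * (t + s)) ≤ s * y := Nat.mul_le_mul_left s hy
          have h2 : m * s ≤ t * s := Nat.mul_le_mul_right s hmt
          rcases hts.eq_or_lt with h | h
          · have hm1 : m = 1 := by
              rw [hm, ← h, Nat.gcd_eq_left hdt, Nat.div_self hdpos]
            have h3 : t * 1 ≤ t * x := Nat.mul_le_mul_left t hx1.1
            subst hm1
            subst h
            rw [mul_assoc] at hzU
            omega
          · have h3 : (t + 1) * ((t + q) * (t + s)) ≤ s * ((t + q) * (t + s)) :=
              Nat.mul_le_mul_right _ h
            have h4 : t * s ≤ (t + q) * (t + s) := Nat.mul_le_mul (by omega) (by omega)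
            rw [add_mul] at h3
            rw [mul_assoc] at hzU
            omega
      · have h1 : t * ((t + q) * (t + s)) ≤ t * x := Nat.mul_le_mul_left t hx
        have h2 : s * m ≤ s * y := Nat.mul_le_mul_left s hmy'
        rw [mul_assoc, mul_comm m s] at hzU
        omega
  refine ⟨key, ?_⟩
  intro M hM h
  by_contra hlt
  push Not at hlt
  obtain ⟨χ, h0, h1⟩ := key
  have sub : ∀ x ∈ Finset.Icc 1 M, x ∈ Finset.Icc 1 (t * (t + q) * (t + s) + m * s - 1) := by
    intro x hx
    rw [Finset.mem_Icc] at hx ⊢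
    omega
  rcases h χ with ⟨x, y, z, hx, hy, hz, r⟩ | ⟨x, y, z, hx, hy, hz, r⟩
  · exact h0 ⟨x, y, z, sub x hx, sub y hy, sub z hz, r⟩
  · exact h1 ⟨x, y, z, sub x hx, sub y hy, sub z hz, r⟩
end

section
/- For every positive integer q, RR_1(q,1) = 2q + 2⌊(q+1)/2⌋ + 1. That is, 2q + 2⌊(q+1)/2⌋ + 1 is the least positive integer N such that every 2-coloring χ of {1,…,N} admits x, y, z ∈ {1,…,N} with x + qy = z and χ(x) = χ(y) = χ(z) = 0, or x, y, z ∈ {1,…,N} with x + y = z and χ(x) = χ(y) = χ(z) = 1. -/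
/-- Theorem 3.1, case `s = 1`: `RR_1(q,1) = 2q + 2⌊(q+1)/2⌋ + 1`. -/
theorem RR_one_q_one (q : ℕ) (hq : 0 < q) :
    IsLeast {N : ℕ | 0 < N ∧ ∀ χ : ℕ → Fin 2,
      (∃ x y z : ℕ, x ∈ Finset.Icc 1 N ∧ y ∈ Finset.Icc 1 N ∧
        z ∈ Finset.Icc 1 N ∧ x + q * y = z ∧ χ x = 0 ∧ χ y = 0 ∧ χ z = 0) ∨
      (∃ x y z : ℕ, x ∈ Finset.Icc 1 N ∧ y ∈ Finset.Icc 1 N ∧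
        z ∈ Finset.Icc 1 N ∧ x + y = z ∧ χ x = 1 ∧ χ y = 1 ∧ χ z = 1)}
      (2 * q + 2 * ((q + 1) / 2) + 1) := by
  constructor
  · refine ⟨by omega, fun χ => ?_⟩
    obtain ⟨m, hm⟩ : ∃ m, m = (q + 1) / 2 := ⟨_, rfl⟩
    rw [← hm]
    by_contra hcon
    rw [not_or] at hcon
    obtain ⟨h0, h1⟩ := hcon
    have two : ∀ n, χ n ≠ 0 → χ n = 1 := fun n h => by
      generalize χ n = a at *
      revert h; revert a; decide
    have ne01 : ∀ n, χ n = 0 → χ n = 1 → False := fun n h h' => by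
      rw [h] at h'; exact absurd h' (by decide)
    have A1 : ∀ x, 1 ≤ x → x + q ≤ 2 * q + 2 * m + 1 → χ 1 = 0 → χ x = 0 → χ (x + q) = 1 := by
      intro x hx hz h1 hx0
      refine two _ fun hz0 => h0 ⟨x, 1, x + q, ?_, ?_, ?_, by ring, hx0, h1, hz0⟩ <;>
        rw [Finset.mem_Icc] <;> omega
    have A2 : ∀ x, 1 ≤ x → x + 2 * q ≤ 2 * q + 2 * m + 1 → χ 2 = 0 → χ x = 0 →
        χ (x + 2 * q) = 1 := by
      intro x hx hz h1 hx0
      refine two _ fun hz0 => h0 ⟨x, 2, x + 2 * q, ?_, ?_, ?_, by ring, hx0, h1, hz0⟩ <;>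
        rw [Finset.mem_Icc] <;> omega
    have B : ∀ x y z, 1 ≤ x → 1 ≤ y → x + y = z → z ≤ 2 * q + 2 * m + 1 →
        χ x = 1 → χ y = 1 → χ z = 1 → False := by
      intro x y z hx hy hz hN a b c
      refine h1 ⟨x, y, z, ?_, ?_, ?_, hz, a, b, c⟩ <;>
        rw [Finset.mem_Icc] <;> omega
    have one : ∀ n, (χ n = 1 → False) → χ n = 0 := fun n h => by
      by_contra h'; exact h (two n h')
    by_cases c1 : χ 1 = 0
    · have a1 := A1 1 (by omega) (by omega) c1 c1
      have a2 : χ (2 * q + 2) = 0 := one _ fun h =>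
        B (1 + q) (1 + q) _ (by omega) (by omega) (by omega) (by omega) a1 a1 h
      have a3 : χ 2 = 1 := two _ fun h => ne01 _ a2 (by
        have := A2 2 (by omega) (by omega) h h
        rwa [add_comm] at this)
      have a4 : χ (q + 3) = 0 := one _ fun h =>
        B (1 + q) 2 _ (by omega) (by omega) (by omega) (by omega) a1 a3 h
      have a5 : χ 3 = 1 := two _ fun h => ne01 _ a4 (by
        have := A1 3 (by omega) (by omega) c1 h
        rwa [add_comm] at this)
      have a6 : χ (q + 2) = 1 := two _ fun h => ne01 _ a2 (by
        have := A1 (q + 2) (by omega) (by omega) c1 h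
        rwa [show q + 2 + q = 2 * q + 2 by ring] at this)
      have a7 : χ q = 0 := one _ fun h =>
        B q 2 _ (by omega) (by omega) (by omega) (by omega) h a3 a6
      have a8 := A1 q (by omega) (by omega) c1 a7
      have a9 := A1 (q + 3) (by omega) (by omega) c1 a4
      exact B (q + q) 3 _ (by omega) (by omega) (by omega) (by omega) a8 a5 a9
    · have c1 := two _ c1
      have b2 : χ 2 = 0 := one _ fun h =>
        B 1 1 2 (by omega) (by omega) (by omega) (by omega) c1 c1 h
      have b3 := A2 2 (by omega) (by omega) b2 b2
      have b4 : χ (q + 1) = 0 := one _ fun h =>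
        B (q + 1) (q + 1) _ (by omega) (by omega) (by omega) (by omega) h h b3
      have key : ∀ j, j ≤ m → χ (2 * j + 1) = 1 := by
        intro j
        induction j with
        | zero => intro _; exact c1
        | succ j ih =>
          intro hj
          have d1 := ih (by omega)
          have d2 : χ (2 * j + 2) = 0 := one _ fun h =>
            B (2 * j + 1) 1 _ (by omega) (by omega) (by omega) (by omega) d1 c1 h
          have d3 := A2 (2 * j + 2) (by omega) (by omega) b2 d2
          refine two _ fun h => ?_
          have d4 := A2 (2 * (j + 1) + 1) (by omega) (by omega) b2 h
          exact B (2 * j + 2 + 2 * q) 1 _ (by omega) (by omega) (by omega) (by omega) d3 c1 d4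
      rcases Nat.even_or_odd' q with ⟨k, hk | hk⟩
      · have := key k (by omega)
        rw [← hk] at this
        exact ne01 _ b4 this
      · have e1 := key k (by omega)
        have e2 := key (k + 1) (by omega)
        exact B _ _ _ (by omega) (by omega) (by omega) (by omega) e1 e2 b3
  · rintro N ⟨hN, h⟩
    by_contra hlt
    rw [not_le] at hlt
    have hχ := h (fun n => if (n ≤ q ∧ n % 2 = 1) ∨ (2 * q + 2 ≤ n ∧ n % 2 = 0) then 1 else 0)
    simp only [Finset.mem_Icc] at hχ
    rcases hχ with ⟨x, y, z, hx, hy, hz, e, h1, h2, h3⟩ | ⟨x, y, z, hx, hy, hz, e, h1, h2, h3⟩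
    · simp only [ite_eq_right_iff, one_ne_zero, imp_false] at h1 h2 h3
      have hy2 : y ≠ 1 := by omega
      rcases (show y = 2 ∨ 3 ≤ y by omega) with rfl | hy3
      · omega
      · have : q * 3 ≤ q * y := Nat.mul_le_mul_left q hy3
        omega
    · simp only [ite_eq_left_iff, zero_ne_one, imp_false, not_not] at h1 h2 h3
      omega
end

section
/- For all integers q ≥ s ≥ 2, RR_1(q,s) = (q+1)(s+1) + s. That is, (q+1)(s+1)+s is the least positive integer N such that every 2-coloring χ of {1,…,N} admits x, y, z ∈ {1,…,N} with x + qy = z and χ(x) = χ(y) = χ(z) = 0, or x, y, z ∈ {1,…,N} with x + sy = z and χ(x) = χ(y) = χ(z) = 1. -/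
set_option maxHeartbeats 4000000 in
theorem RR_aux (q s : ℕ) (hs : 2 ≤ s) (hqs : s ≤ q) (χ : ℕ → Fin 2)
    (h0 : ∀ x y z : ℕ, 0 < x → 0 < y → z ≤ (q + 1) * (s + 1) + s → x + q * y = z →
      χ x = 0 → χ y = 0 → χ z = 0 → False)
    (h1 : ∀ x y z : ℕ, 0 < x → 0 < y → z ≤ (q + 1) * (s + 1) + s → x + s * y = z →
      χ x = 1 → χ y = 1 → χ z = 1 → False) : False := by
  have to1 : ∀ n, (χ n = 0 → False) → χ n = 1 := fun n h => by
    have := h; revert this; generalize χ n = c; revert c; decide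
  have to0 : ∀ n, (χ n = 1 → False) → χ n = 0 := fun n h => by
    have := h; revert this; generalize χ n = c; revert c; decide
  have two : ∀ n, χ n = 0 ∨ χ n = 1 := fun n => by
    generalize χ n = c; revert c; decide
  have hm1 : 2 * q ≤ q * s := by nlinarith
  have hm2 : 2 * s ≤ q * s := by nlinarith
  have hm3 : s * s ≤ q * s := by nlinarith
  rcases two 1 with a1 | a1
  · skip
    have a2 : χ (q + 1) = 1 := to1 _ fun h => h0 (1) (1) (q + 1) (by positivity) (by omega) (by first | omega | nlinarith) (by first | ring1 | linarith) ‹_› ‹_› h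
    have a3 : χ ((q + 1) * (s + 1)) = 0 := to0 _ fun h => h1 (q + 1) (q + 1) ((q + 1) * (s + 1)) (by positivity) (by omega) (by first | omega | nlinarith) (by first | ring1 | linarith) ‹_› ‹_› h
    have a4 : χ (s + 1) = 1 := to1 _ fun h => h0 (s + 1) (s + 1) ((q + 1) * (s + 1)) (by positivity) (by omega) (by first | omega | nlinarith) (by first | ring1 | linarith) h h ‹_›
    have a5 : χ ((s + 1) + s * (q + 1)) = 0 := to0 _ fun h => h1 (s + 1) (q + 1) ((s + 1) + s * (q + 1)) (by positivity) (by omega) (by first | omega | nlinarith) (by first | ring1 | linarith) ‹_› ‹_› h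
    have a6 : χ ((q + 1) * (s + 1) + s) = 1 := to1 _ fun h => h0 ((s + 1) + s * (q + 1)) (1) ((q + 1) * (s + 1) + s) (by positivity) (by omega) (by first | omega | nlinarith) (by first | ring1 | linarith) ‹_› ‹_› h
    have a7 : χ (q + 2) = 0 := to0 _ fun h => h1 (q + 1) (q + 2) ((q + 1) * (s + 1) + s) (by positivity) (by omega) (by first | omega | nlinarith) (by first | ring1 | linarith) ‹_› h ‹_›
    have a8 : χ (2) = 1 := to1 _ fun h => h0 (2) (1) (q + 2) (by positivity) (by omega) (by first | omega | nlinarith) (by first | ring1 | linarith) h ‹_› ‹_›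
    have a9 : χ (3 * s + 1) = 0 := to0 _ fun h => h1 (s + 1) (2) (3 * s + 1) (by positivity) (by omega) (by first | omega | nlinarith) (by first | ring1 | linarith) ‹_› ‹_› h
    have a10 : χ (q + 3 * s + 1) = 1 := to1 _ fun h => h0 (3 * s + 1) (1) (q + 3 * s + 1) (by positivity) (by omega) (by first | omega | nlinarith) (by first | ring1 | linarith) ‹_› ‹_› h
    have a11 : χ (3) = 0 := to0 _ fun h => h1 (q + 1) (3) (q + 3 * s + 1) (by positivity) (by omega) (by first | omega | nlinarith) (by first | ring1 | linarith) ‹_› h ‹_›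
    have a12 : χ (3 * q + 1) = 1 := to1 _ fun h => h0 (1) (3) (3 * q + 1) (by positivity) (by omega) (by first | omega | nlinarith) (by first | ring1 | linarith) ‹_› ‹_› h
    rcases hqs.eq_or_lt with e | e
    · subst e
      exact h1 (s + 1) (2) (3 * s + 1) (by positivity) (by omega) (by first | omega | nlinarith) (by first | ring1 | linarith) ‹_› ‹_› ‹_›
    · obtain ⟨w, hw⟩ : ∃ w, w + q = s * (q + 1) + 2 := ⟨s * (q + 1) + 2 - q, by
        have : q ≤ s * (q + 1) + 2 := by nlinarith
        omega⟩
      have w0 : 0 < w := by nlinarith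
      have b1 : χ (q + 3) = 1 := to1 _ fun h => h0 (3) (1) (q + 3) (by positivity) (by omega) (by first | omega | nlinarith) (by first | ring1 | linarith) ‹_› ‹_› h
      have b2 : χ (2 + s * (q + 3)) = 0 := to0 _ fun h => h1 (2) (q + 3) (2 + s * (q + 3)) (by positivity) (by omega) (by first | omega | nlinarith) (by first | ring1 | linarith) ‹_› ‹_› h
      have b3 : χ (w + s * 2) = 1 := to1 _ fun h => h0 (w + s * 2) (1) (2 + s * (q + 3)) (by positivity) (by omega) (by first | omega | nlinarith) (by first | ring1 | linarith) h ‹_› ‹_›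
      have b4 : χ (w) = 0 := to0 _ fun h => h1 (w) (2) (w + s * 2) (by positivity) (by omega) (by first | omega | nlinarith) (by first | ring1 | linarith) h ‹_› ‹_›
      have b5 : χ (2 + s * (q + 1)) = 1 := to1 _ fun h => h0 (w) (1) (2 + s * (q + 1)) (by positivity) (by omega) (by first | omega | nlinarith) (by first | ring1 | linarith) ‹_› ‹_› h
      exact h1 (2) (q + 1) (2 + s * (q + 1)) (by positivity) (by omega) (by first | omega | nlinarith) (by first | ring1 | linarith) ‹_› ‹_› ‹_›
  · skip
    have a2 : χ (s + 1) = 0 := to0 _ fun h => h1 (1) (1) (s + 1) (by positivity) (by omega) (by first | omega | nlinarith) (by first | ring1 | linarith) ‹_› ‹_› h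
    have a3 : χ ((q + 1) * (s + 1)) = 1 := to1 _ fun h => h0 (s + 1) (s + 1) ((q + 1) * (s + 1)) (by positivity) (by omega) (by first | omega | nlinarith) (by first | ring1 | linarith) ‹_› ‹_› h
    have a4 : χ ((q + 1) * (s + 1) + s) = 0 := to0 _ fun h => h1 ((q + 1) * (s + 1)) (1) ((q + 1) * (s + 1) + s) (by positivity) (by omega) (by first | omega | nlinarith) (by first | ring1 | linarith) ‹_› ‹_› h
    have a5 : χ (2 * s + 1) = 1 := to1 _ fun h => h0 (2 * s + 1) (s + 1) ((q + 1) * (s + 1) + s) (by positivity) (by omega) (by first | omega | nlinarith) (by first | ring1 | linarith) h ‹_› ‹_›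
    have a6 : χ (2) = 0 := to0 _ fun h => h1 (1) (2) (2 * s + 1) (by positivity) (by omega) (by first | omega | nlinarith) (by first | ring1 | linarith) ‹_› h ‹_›
    have a7 : χ (s + 1 + 2 * q) = 1 := to1 _ fun h => h0 (s + 1) (2) (s + 1 + 2 * q) (by positivity) (by omega) (by first | omega | nlinarith) (by first | ring1 | linarith) ‹_› ‹_› h
    rcases hs.eq_or_lt with e | e
    · subst e
      have b1 : χ (3 * q + 1) = 0 := to0 _ fun h => h1 (3 * q + 1) (1) ((q + 1) * (2 + 1)) (by positivity) (by omega) (by first | omega | nlinarith) (by first | ring1 | linarith) h ‹_› ‹_›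
      have b2 : χ (q + 1) = 1 := to1 _ fun h => h0 (q + 1) (2) (3 * q + 1) (by positivity) (by omega) (by first | omega | nlinarith) (by first | ring1 | linarith) h ‹_› ‹_›
      exact h1 (1) (q + 1) (2 + 1 + 2 * q) (by positivity) (by omega) (by first | omega | nlinarith) (by first | ring1 | linarith) ‹_› ‹_› ‹_›
    · have hm4 : 3 * q ≤ q * s := by nlinarith
      have b1 : χ (3 * s + 1) = 0 := to0 _ fun h => h1 (2 * s + 1) (1) (3 * s + 1) (by positivity) (by omega) (by first | omega | nlinarith) (by first | ring1 | linarith) ‹_› ‹_› h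
      have b2 : χ (3 * s + 1 + 2 * q) = 1 := to1 _ fun h => h0 (3 * s + 1) (2) (3 * s + 1 + 2 * q) (by positivity) (by omega) (by first | omega | nlinarith) (by first | ring1 | linarith) ‹_› ‹_› h
      have b3 : χ (4 * s + 1 + 2 * q) = 0 := to0 _ fun h => h1 (3 * s + 1 + 2 * q) (1) (4 * s + 1 + 2 * q) (by positivity) (by omega) (by first | omega | nlinarith) (by first | ring1 | linarith) ‹_› ‹_› h
      have b4 : χ (4 * s + 1) = 1 := to1 _ fun h => h0 (4 * s + 1) (2) (4 * s + 1 + 2 * q) (by positivity) (by omega) (by first | omega | nlinarith) (by first | ring1 | linarith) h ‹_› ‹_›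
      have b5 : χ (4) = 0 := to0 _ fun h => h1 (1) (4) (4 * s + 1) (by positivity) (by omega) (by first | omega | nlinarith) (by first | ring1 | linarith) ‹_› h ‹_›
      have b6 : χ (1 + 2 * q) = 0 := to0 _ fun h => h1 (1 + 2 * q) (1) (s + 1 + 2 * q) (by positivity) (by omega) (by first | omega | nlinarith) (by first | ring1 | linarith) h ‹_› ‹_›
      have b7 : χ (1 + 4 * q) = 1 := to1 _ fun h => h0 (1 + 2 * q) (2) (1 + 4 * q) (by positivity) (by omega) (by first | omega | nlinarith) (by first | ring1 | linarith) ‹_› ‹_› h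
      have b8 : χ (s + 1 + 4 * q) = 0 := to0 _ fun h => h1 (1 + 4 * q) (1) (s + 1 + 4 * q) (by positivity) (by omega) (by first | omega | nlinarith) (by first | ring1 | linarith) ‹_› ‹_› h
      exact h0 (s + 1) (4) (s + 1 + 4 * q) (by positivity) (by omega) (by first | omega | nlinarith) (by first | ring1 | linarith) ‹_› ‹_› ‹_›

/-- Theorem 3.1, case `s ≥ 2`: for `q ≥ s ≥ 2`, `RR_1(q,s) = (q+1)(s+1) + s`. -/
theorem RR_one_q_s (q s : ℕ) (hs : 2 ≤ s) (hqs : s ≤ q) :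
    IsLeast {N : ℕ | 0 < N ∧ ∀ χ : ℕ → Fin 2,
      (∃ x y z : ℕ, x ∈ Finset.Icc 1 N ∧ y ∈ Finset.Icc 1 N ∧
        z ∈ Finset.Icc 1 N ∧ x + q * y = z ∧ χ x = 0 ∧ χ y = 0 ∧ χ z = 0) ∨
      (∃ x y z : ℕ, x ∈ Finset.Icc 1 N ∧ y ∈ Finset.Icc 1 N ∧
        z ∈ Finset.Icc 1 N ∧ x + s * y = z ∧ χ x = 1 ∧ χ y = 1 ∧ χ z = 1)}
      ((q + 1) * (s + 1) + s) := by
  constructor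
  · refine ⟨by positivity, fun χ => ?_⟩
    by_contra hc
    rw [not_or] at hc
    obtain ⟨c0, c1⟩ := hc
    refine RR_aux q s hs hqs χ ?_ ?_
    · intro x y z hx hy hz e ex ey ez
      have : y ≤ q * y := Nat.le_mul_of_pos_left _ (by omega)
      exact c0 ⟨x, y, z, Finset.mem_Icc.2 ⟨hx, by omega⟩, Finset.mem_Icc.2 ⟨hy, by omega⟩,
        Finset.mem_Icc.2 ⟨by omega, hz⟩, e, ex, ey, ez⟩
    · intro x y z hx hy hz e ex ey ez
      have : y ≤ s * y := Nat.le_mul_of_pos_left _ (by omega)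
      exact c1 ⟨x, y, z, Finset.mem_Icc.2 ⟨hx, by omega⟩, Finset.mem_Icc.2 ⟨hy, by omega⟩,
        Finset.mem_Icc.2 ⟨by omega, hz⟩, e, ex, ey, ez⟩
  · rintro N ⟨hN, h⟩
    by_contra hlt
    push Not at hlt
    rcases h (fun n => if s + 1 ≤ n ∧ n < (q + 1) * (s + 1) then 0 else 1) with
      ⟨x, y, z, hx, hy, hz, e, ex, ey, ez⟩ | ⟨x, y, z, hx, hy, hz, e, ex, ey, ez⟩
    · simp at ex ey ez
      nlinarith [Nat.mul_le_mul_left q ey.1]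
    · rw [Finset.mem_Icc] at hx hy hz
      simp at ex ey ez
      by_cases y1 : s + 1 ≤ y
      · have := ey y1
        nlinarith
      · by_cases x1 : s + 1 ≤ x
        · have := ex x1
          nlinarith
        · have z1 : s + 1 ≤ z := by nlinarith
          have := ez z1
          have : s * y ≤ s * s := Nat.mul_le_mul_left s (by omega)
          nlinarith
end

section
/- Let k, ℓ ≥ 1 and let a₁, …, a_k, b₁, …, b_ℓ be positive integers with a₁ + ⋯ + a_k ≥ b₁ + ⋯ + b_ℓ, and suppose b₁ + ⋯ + b_ℓ = 1 (so ℓ = 1 and b₁ = 1). Set Q = a₁ + ⋯ + a_k. Then the least positive integer N such that every 2-coloring χ of {1,…,N} admits either values x, y₁, …, y_k, z ∈ {1,…,N} with x + a₁y₁ + ⋯ + a_ky_k = z all colored 0, or values x, y, z ∈ {1,…,N} with x + y = z all colored 1, is N = 2Q + 2⌊(Q+1)/2⌋ + 1. -/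
lemma upper_aux (Q N : ℕ) (hQ : 1 ≤ Q) (hN : N = 2 * Q + 2 * ((Q + 1) / 2) + 1)
    (P : ℕ → Prop)
    (h0 : ∀ x y, 1 ≤ x → 1 ≤ y → x + Q * y ≤ N → P x → P y → P (x + Q * y) → False)
    (h1 : ∀ x y, 1 ≤ x → 1 ≤ y → x + y ≤ N → ¬ P x → ¬ P y → ¬ P (x + y) → False) :
    False := by
  have g1 : ∀ x z, 1 ≤ x → z = x + Q → z ≤ N → P x → P 1 → ¬ P z := by
    intro x z hx hz hzN p1 p2 p3
    apply h0 x 1 hx le_rfl <;> simp_all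
  have g2 : ∀ x z, 1 ≤ x → z = x + 2 * Q → z ≤ N → P x → P 2 → ¬ P z := by
    intro x z hx hz hzN p1 p2 p3
    have e : x + Q * 2 = z := by omega
    exact h0 x 2 hx (by norm_num) (by omega) p1 p2 (e ▸ p3)
  have s : ∀ x y z, 1 ≤ x → 1 ≤ y → z = x + y → z ≤ N → ¬ P x → ¬ P y → P z := by
    intro x y z hx hy hz hzN p1 p2
    by_contra p3
    exact h1 x y hx hy (by omega) p1 p2 (hz ▸ p3)
  by_cases c : P 1
  · have a1 : ¬ P (Q + 1) := g1 1 _ (by omega) (by omega) (by omega) c c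
    have a2 : P (2 * Q + 2) := s _ _ _ (by omega) (by omega) (by omega) (by omega) a1 a1
    have a3 : ¬ P (Q + 2) := fun h => g1 (Q + 2) _ (by omega) (by omega) (by omega) h c a2
    have a4 : ¬ P 2 := fun h => g2 2 (2 * Q + 2) (by omega) (by omega) (by omega) h h a2
    have a5 : P (2 * Q + 3) := s _ _ _ (by omega) (by omega) (by omega) (by omega) a1 a3
    have a6 : P (Q + 3) := s _ _ _ (by omega) (by omega) (by omega) (by omega) a1 a4
    exact g1 (Q + 3) _ (by omega) (by omega) (by omega) a6 c a5
  · have a2 : P 2 := s 1 1 2 (by omega) (by omega) (by omega) (by omega) c c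
    have key : ∀ j, 2 * j + 1 + 2 * Q ≤ N → ¬ P (2 * j + 1) := by
      intro j
      induction j with
      | zero => intro _; simpa using c
      | succ j ih =>
        intro hj
        have b1 := ih (by omega)
        have b2 : P (2 * j + 2) := s _ _ _ (by omega) (by omega) (by omega) (by omega) b1 c
        have b3 : ¬ P (2 * j + 2 + 2 * Q) := g2 _ _ (by omega) rfl (by omega) b2 a2
        have b4 : P (2 * (j + 1) + 1 + 2 * Q) :=
          s _ _ _ (by omega) (by omega) (by omega) (by omega) b3 c
        exact fun h => g2 _ _ (by omega) rfl (by omega) h a2 b4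
    have e : ¬ P (2 * Q + 2) := g2 2 _ (by omega) (by omega) (by omega) a2 a2
    apply e
    rcases Nat.even_or_odd' Q with ⟨m, hm | hm⟩
    · have := key m (by omega)
      exact s _ _ _ (by omega) (by omega) (by omega) (by omega) this this
    · have u := key m (by omega)
      have v := key (m + 1) (by omega)
      exact s _ _ _ (by omega) (by omega) (by omega) (by omega) u v

/-- Corollary 3.2, case `∑ bᵢ = 1`: the off-diagonal Rado number of
`x + a₁y₁ + ⋯ + a_k y_k = z` and `x + y = z` is
`2Q + 2⌊(Q+1)/2⌋ + 1` where `Q = a₁ + ⋯ + a_k`. -/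
theorem off_diagonal_rado_corollary_s_eq_one (k ℓ : ℕ) (hk : 1 ≤ k) (hl : 1 ≤ ℓ)
    (a : Fin k → ℕ) (b : Fin ℓ → ℕ)
    (ha : ∀ i, 0 < a i) (hb : ∀ i, 0 < b i)
    (hab : (∑ i, b i) ≤ ∑ i, a i) (hb1 : (∑ i, b i) = 1) :
    IsLeast {N : ℕ | 0 < N ∧ ∀ χ : ℕ → Fin 2,
      (∃ (x : ℕ) (y : Fin k → ℕ) (z : ℕ),
        x ∈ Finset.Icc 1 N ∧ (∀ i, y i ∈ Finset.Icc 1 N) ∧ z ∈ Finset.Icc 1 N ∧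
        x + ∑ i, a i * y i = z ∧ χ x = 0 ∧ (∀ i, χ (y i) = 0) ∧ χ z = 0) ∨
      (∃ x y z : ℕ, x ∈ Finset.Icc 1 N ∧ y ∈ Finset.Icc 1 N ∧
        z ∈ Finset.Icc 1 N ∧ x + y = z ∧ χ x = 1 ∧ χ y = 1 ∧ χ z = 1)}
      (2 * (∑ i, a i) + 2 * (((∑ i, a i) + 1) / 2) + 1) := by
  have hQ : 1 ≤ ∑ i, a i := by omega
  generalize hQd : ∑ i, a i = Q at *
  constructor
  · refine ⟨by omega, fun χ => ?_⟩
    by_contra hcon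
    push Not at hcon
    obtain ⟨c0, c1⟩ := hcon
    refine upper_aux Q _ hQ rfl (fun n => χ n = 0) ?_ ?_
    · intro x y hx hy hxy p1 p2 p3
      have hyQ : y ≤ Q * y := Nat.le_mul_of_pos_left y hQ
      refine c0 x (fun _ => y) (x + Q * y) ?_ ?_ ?_ ?_ p1 (fun _ => p2) p3
      · exact Finset.mem_Icc.2 ⟨hx, by omega⟩
      · exact fun _ => Finset.mem_Icc.2 ⟨hy, by omega⟩
      · exact Finset.mem_Icc.2 ⟨by omega, hxy⟩
      · rw [← Finset.sum_mul, hQd]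
    · intro x y hx hy hxy p1 p2 p3
      have f : ∀ t : Fin 2, ¬ t = 0 → t = 1 := by decide
      refine c1 x y (x + y) ?_ ?_ ?_ rfl (f _ p1) (f _ p2) (f _ p3)
      · exact Finset.mem_Icc.2 ⟨hx, by omega⟩
      · exact Finset.mem_Icc.2 ⟨hy, by omega⟩
      · exact Finset.mem_Icc.2 ⟨by omega, hxy⟩
  · rintro N ⟨hN0, hN⟩
    by_contra hlt
    push Not at hlt
    have hc := hN (fun n => if (n % 2 = 1 ∧ n ≤ Q) ∨ (n % 2 = 0 ∧ 2 * Q + 2 ≤ n) then 1 else 0)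
    rcases hc with ⟨x, y, z, hx, hy, hz, he, px, py, pz⟩ | ⟨x, y, z, hx, hy, hz, he, px, py, pz⟩
    · simp only [Finset.mem_Icc] at hx hy hz
      have f : ∀ n, (if (n % 2 = 1 ∧ n ≤ Q) ∨ (n % 2 = 0 ∧ 2 * Q + 2 ≤ n) then (1 : Fin 2) else 0) = 0 →
          ¬ ((n % 2 = 1 ∧ n ≤ Q) ∨ (n % 2 = 0 ∧ 2 * Q + 2 ≤ n)) := by
        intro n h h'
        simp [h'] at h
      have px := f _ px
      have py := fun i => f _ (py i)
      have pz := f _ pz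
      have hy2 : ∀ i, 2 ≤ y i := fun i => by have := py i; have := hy i; omega
      have hsum : 2 * Q ≤ ∑ i, a i * y i := by
        rw [← hQd, mul_comm, Finset.sum_mul]
        exact Finset.sum_le_sum fun i _ => Nat.mul_le_mul_left _ (hy2 i)
      by_cases hev : ∀ i, y i % 2 = 0
      · have hs : 2 ∣ ∑ i, a i * y i :=
          Finset.dvd_sum fun i _ => Dvd.dvd.mul_left (Nat.dvd_of_mod_eq_zero (hev i)) _
        omega
      · push Not at hev
        obtain ⟨i, hi⟩ := hev
        have hsum2 : 2 * Q + (y i - 2) ≤ ∑ i, a i * y i := by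
          rw [← hQd, mul_comm, Finset.sum_mul,
            ← Finset.add_sum_erase _ _ (Finset.mem_univ i),
            ← Finset.add_sum_erase _ (fun i => a i * y i) (Finset.mem_univ i)]
          have h1 : ∑ j ∈ Finset.univ.erase i, a j * 2 ≤ ∑ j ∈ Finset.univ.erase i, a j * y j :=
            Finset.sum_le_sum fun i _ => Nat.mul_le_mul_left _ (hy2 i)
          have h2 : a i * 2 + (y i - 2) ≤ a i * y i := by
            obtain ⟨t, ht⟩ := Nat.exists_eq_add_of_le (hy2 i)
            rw [ht]
            have := Nat.le_mul_of_pos_left t (ha i)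
            rw [mul_add]
            omega
          omega
        have := py i
        have := hy2 i
        omega
    · simp only [Finset.mem_Icc] at hx hy hz
      have f : ∀ n, (if (n % 2 = 1 ∧ n ≤ Q) ∨ (n % 2 = 0 ∧ 2 * Q + 2 ≤ n) then (1 : Fin 2) else 0) = 1 →
          ((n % 2 = 1 ∧ n ≤ Q) ∨ (n % 2 = 0 ∧ 2 * Q + 2 ≤ n)) := by
        intro n h
        by_contra h'
        simp [h'] at h
      have px := f _ px
      have py := f _ py
      have pz := f _ pz
      omega
end

section
/- Let k, ℓ ≥ 1 and let a₁, …, a_k, b₁, …, b_ℓ be positive integers with a₁ + ⋯ + a_k ≥ b₁ + ⋯ + b_ℓ ≥ 2. Set Q = a₁ + ⋯ + a_k and S = b₁ + ⋯ + b_ℓ. Then the least positive integer N such that every 2-coloring χ of {1,…,N} admits either values x, y₁, …, y_k, z ∈ {1,…,N} with x + a₁y₁ + ⋯ + a_ky_k = z all colored 0, or values x, y₁, …, y_ℓ, z ∈ {1,…,N} with x + b₁y₁ + ⋯ + b_ℓy_ℓ = z all colored 1, is N = (Q+1)(S+1) + S. -/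
lemma rado_core (q t d : ℕ) (ht : 1 ≤ t) (hq : q = t + 1 + d) (P : ℕ → Prop)
    (h0 : ∀ x y z, 1 ≤ x → 1 ≤ y → z ≤ (q + 1) * (t + 2) + (t + 1) → x + q * y = z →
      P x → P y → P z → False)
    (h1 : ∀ x y z, 1 ≤ x → 1 ≤ y → z ≤ (q + 1) * (t + 2) + (t + 1) → x + (t + 1) * y = z →
      ¬ P x → ¬ P y → ¬ P z → False) : False := by
  have e : t ≤ t * t := Nat.le_mul_of_pos_left t ht
  have e2 : d ≤ t * d := Nat.le_mul_of_pos_left d ht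
  by_cases c1 : P 1
  · have g1 : ¬ P (q+1) := fun hh =>
        h0 (1) (1) (q+1) (by nlinarith) (by nlinarith) (by subst hq; nlinarith) (by ring) c1 c1 hh
    have g2 : P (q*(t+1)+(t+1)+q+1) := by_contra fun hh =>
        h1 (q+1) (q+1) (q*(t+1)+(t+1)+q+1) (by nlinarith) (by nlinarith) (by subst hq; nlinarith) (by ring) g1 g1 hh
    have g3 : ¬ P ((t+1)+1) := fun hh =>
        h0 ((t+1)+1) ((t+1)+1) (q*(t+1)+(t+1)+q+1) (by nlinarith) (by nlinarith) (by subst hq; nlinarith) (by ring) hh hh g2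
    have g4 : P (q*(t+1)+2*(t+1)+1) := by_contra fun hh =>
        h1 ((t+1)+1) (q+1) (q*(t+1)+2*(t+1)+1) (by nlinarith) (by nlinarith) (by subst hq; nlinarith) (by ring) g3 g1 hh
    have g5 : ¬ P (q*(t+1)+2*(t+1)+q+1) := fun hh =>
        h0 (q*(t+1)+2*(t+1)+1) (1) (q*(t+1)+2*(t+1)+q+1) (by nlinarith) (by nlinarith) (by subst hq; nlinarith) (by ring) g4 c1 hh
    have g6 : P ((t+1)+q+1) := by_contra fun hh =>
        h1 ((t+1)+q+1) (q+1) (q*(t+1)+2*(t+1)+q+1) (by nlinarith) (by nlinarith) (by subst hq; nlinarith) (by ring) hh g1 g5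
    have g7 : P ((t+1)*(t+1)+(t+1)+q+1) := by_contra fun hh =>
        h1 (q+1) ((t+1)+1) ((t+1)*(t+1)+(t+1)+q+1) (by nlinarith) (by nlinarith) (by subst hq; nlinarith) (by ring) g1 g3 hh
    have g8 : ¬ P ((t+1)*(t+1)+(t+1)+1) := fun hh =>
        h0 ((t+1)*(t+1)+(t+1)+1) (1) ((t+1)*(t+1)+(t+1)+q+1) (by nlinarith) (by nlinarith) (by subst hq; nlinarith) (by ring) hh c1 g7
    have g9 : P ((t+1)) := by_contra fun hh =>
        h1 ((t+1)+1) ((t+1)) ((t+1)*(t+1)+(t+1)+1) (by nlinarith) (by nlinarith) (by subst hq; nlinarith) (by ring) g3 hh g8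
    exact h0 ((t+1)+q+1) ((t+1)) (q*(t+1)+(t+1)+q+1) (by nlinarith) (by nlinarith) (by subst hq; nlinarith) (by ring) g6 g9 g2
  · have g1 : P ((t+1)+1) := by_contra fun hh =>
        h1 (1) (1) ((t+1)+1) (by nlinarith) (by nlinarith) (by subst hq; nlinarith) (by ring) c1 c1 hh
    have g2 : ¬ P (q*(t+1)+(t+1)+q+1) := fun hh =>
        h0 ((t+1)+1) ((t+1)+1) (q*(t+1)+(t+1)+q+1) (by nlinarith) (by nlinarith) (by subst hq; nlinarith) (by ring) g1 g1 hh
    have g3 : P (q*(t+1)+2*(t+1)+q+1) := by_contra fun hh =>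
        h1 (q*(t+1)+(t+1)+q+1) (1) (q*(t+1)+2*(t+1)+q+1) (by nlinarith) (by nlinarith) (by subst hq; nlinarith) (by ring) g2 c1 hh
    have g4 : ¬ P (2*(t+1)+1) := fun hh =>
        h0 (2*(t+1)+1) ((t+1)+1) (q*(t+1)+2*(t+1)+q+1) (by nlinarith) (by nlinarith) (by subst hq; nlinarith) (by ring) hh g1 g3
    have g5 : P (2) := by_contra fun hh =>
        h1 (1) (2) (2*(t+1)+1) (by nlinarith) (by nlinarith) (by subst hq; nlinarith) (by ring) c1 hh g4
    have g6 : P (q+1) := by_contra fun hh =>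
        h1 (q+1) (q+1) (q*(t+1)+(t+1)+q+1) (by nlinarith) (by nlinarith) (by subst hq; nlinarith) (by ring) hh hh g2
    have g7 : P (q*(t+1)+q+1) := by_contra fun hh =>
        h1 (q*(t+1)+q+1) (1) (q*(t+1)+(t+1)+q+1) (by nlinarith) (by nlinarith) (by subst hq; nlinarith) (by ring) hh c1 g2
    have g8 : ¬ P ((t+1)) := fun hh =>
        h0 (q+1) ((t+1)) (q*(t+1)+q+1) (by nlinarith) (by nlinarith) (by subst hq; nlinarith) (by ring) g6 hh g7
    have g9 : P ((t+1)*(t+1)+1) := by_contra fun hh =>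
        h1 (1) ((t+1)) ((t+1)*(t+1)+1) (by nlinarith) (by nlinarith) (by subst hq; nlinarith) (by ring) c1 g8 hh
    have g10 : ¬ P ((t+1)*(t+1)+2*q+1) := fun hh =>
        h0 ((t+1)*(t+1)+1) (2) ((t+1)*(t+1)+2*q+1) (by nlinarith) (by nlinarith) (by subst hq; nlinarith) (by ring) g9 g5 hh
    have g11 : P (2*q+1) := by_contra fun hh =>
        h1 (2*q+1) ((t+1)) ((t+1)*(t+1)+2*q+1) (by nlinarith) (by nlinarith) (by subst hq; nlinarith) (by ring) hh g8 g10
    have g12 : P ((t+1)*(t+1)+(t+1)) := by_contra fun hh =>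
        h1 ((t+1)) ((t+1)) ((t+1)*(t+1)+(t+1)) (by nlinarith) (by nlinarith) (by subst hq; nlinarith) (by ring) g8 g8 hh
    have g13 : ¬ P ((t+1)*(t+1)+(t+1)+2*q) := fun hh =>
        h0 ((t+1)*(t+1)+(t+1)) (2) ((t+1)*(t+1)+(t+1)+2*q) (by nlinarith) (by nlinarith) (by subst hq; nlinarith) (by ring) g12 g5 hh
    have g14 : P (2*(t+1)) := by_contra fun hh =>
        h1 ((t+1)) (1) (2*(t+1)) (by nlinarith) (by nlinarith) (by subst hq; nlinarith) (by ring) g8 c1 hh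
    have g15 : ¬ P (2*(t+1)+2*q) := fun hh =>
        h0 (2*(t+1)) (2) (2*(t+1)+2*q) (by nlinarith) (by nlinarith) (by subst hq; nlinarith) (by ring) g14 g5 hh
    have g16 : P (t) := by_contra fun hh =>
        h1 (2*(t+1)+2*q) (t) ((t+1)*(t+1)+(t+1)+2*q) (by nlinarith) (by nlinarith) (by subst hq; nlinarith) (by ring) g15 hh g13
    exact h0 (2*q+1) (t) (q*(t+1)+q+1) (by nlinarith) (by nlinarith) (by subst hq; nlinarith) (by ring) g11 g16 g7

lemma rado_sum_bound {n : ℕ} (a y : Fin n → ℕ) (ha : ∀ i, 0 < a i) (hy : ∀ i, 1 ≤ y i)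
    (j : Fin n) : (∑ i, a i) + y j ≤ (∑ i, a i * y i) + 1 := by
  rw [← Finset.add_sum_erase _ a (Finset.mem_univ j),
    ← Finset.add_sum_erase _ (fun i => a i * y i) (Finset.mem_univ j)]
  have h : ∑ i ∈ Finset.univ.erase j, a i ≤ ∑ i ∈ Finset.univ.erase j, a i * y i :=
    Finset.sum_le_sum fun i _ => Nat.le_mul_of_pos_right _ (hy i)
  have h2 : a j + y j ≤ a j * y j + 1 := by
    obtain ⟨u, hu⟩ := Nat.exists_eq_add_of_le (ha j)
    obtain ⟨v, hv⟩ := Nat.exists_eq_add_of_le (hy j)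
    rw [hu, hv]; nlinarith [Nat.zero_le (u * v)]
  omega

/-- Corollary 3.2, case `∑ bᵢ ≥ 2`: the off-diagonal Rado number of
`x + a₁y₁ + ⋯ + a_k y_k = z` and `x + b₁y₁ + ⋯ + b_ℓ y_ℓ = z` is
`(Q+1)(S+1) + S` where `Q = a₁ + ⋯ + a_k ≥ S = b₁ + ⋯ + b_ℓ ≥ 2`. -/
theorem off_diagonal_rado_corollary (k ℓ : ℕ) (hk : 1 ≤ k) (hl : 1 ≤ ℓ)
    (a : Fin k → ℕ) (b : Fin ℓ → ℕ)
    (ha : ∀ i, 0 < a i) (hb : ∀ i, 0 < b i)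
    (hab : (∑ i, b i) ≤ ∑ i, a i) (hb2 : 2 ≤ ∑ i, b i) :
    IsLeast {N : ℕ | 0 < N ∧ ∀ χ : ℕ → Fin 2,
      (∃ (x : ℕ) (y : Fin k → ℕ) (z : ℕ),
        x ∈ Finset.Icc 1 N ∧ (∀ i, y i ∈ Finset.Icc 1 N) ∧ z ∈ Finset.Icc 1 N ∧
        x + ∑ i, a i * y i = z ∧ χ x = 0 ∧ (∀ i, χ (y i) = 0) ∧ χ z = 0) ∨
      (∃ (x : ℕ) (y : Fin ℓ → ℕ) (z : ℕ),
        x ∈ Finset.Icc 1 N ∧ (∀ i, y i ∈ Finset.Icc 1 N) ∧ z ∈ Finset.Icc 1 N ∧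
        x + ∑ i, b i * y i = z ∧ χ x = 1 ∧ (∀ i, χ (y i) = 1) ∧ χ z = 1)}
      (((∑ i, a i) + 1) * ((∑ i, b i) + 1) + ∑ i, b i) := by
  have sum_ge : ∀ {n : ℕ} (a y : Fin n → ℕ) (c : ℕ), (∀ i, c ≤ y i) →
      (∑ i, a i) * c ≤ ∑ i, a i * y i := by
    intro n a y c h
    rw [Finset.sum_mul]
    exact Finset.sum_le_sum fun i _ => Nat.mul_le_mul_left _ (h i)
  have sum_le : ∀ {n : ℕ} (a y : Fin n → ℕ) (c : ℕ), (∀ i, y i ≤ c) →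
      ∑ i, a i * y i ≤ (∑ i, a i) * c := by
    intro n a y c h
    rw [Finset.sum_mul]
    exact Finset.sum_le_sum fun i _ => Nat.mul_le_mul_left _ (h i)
  have hbb := rado_sum_bound b
  generalize hS : ∑ i, b i = S at *
  generalize hQ : ∑ i, a i = Q at *
  constructor
  · refine ⟨by positivity, fun χ => ?_⟩
    by_contra hcon
    rw [not_or] at hcon
    obtain ⟨n0, n1⟩ := hcon
    obtain ⟨t, rfl⟩ : ∃ t, S = t + 1 := ⟨S - 1, by omega⟩
    obtain ⟨d, hd⟩ := Nat.exists_eq_add_of_le hab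
    refine rado_core Q t d (by omega) hd (fun n => χ n = 0) ?_ ?_
    · intro x y z hx hy hz he px py pz
      have : y ≤ Q * y := Nat.le_mul_of_pos_left y (by omega)
      refine n0 ⟨x, fun _ => y, z, ?_, ?_, ?_, ?_, px, fun _ => py, pz⟩
      · rw [Finset.mem_Icc]; exact ⟨hx, le_trans (by omega) hz⟩
      · intro _; rw [Finset.mem_Icc]; exact ⟨hy, le_trans (show y ≤ z by omega) hz⟩
      · rw [Finset.mem_Icc]; exact ⟨by omega, hz⟩
      · rw [← Finset.sum_mul, hQ]; exact he
    · intro x y z hx hy hz he px py pz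
      have : y ≤ (t + 1) * y := Nat.le_mul_of_pos_left y (by omega)
      have F : ∀ c : Fin 2, ¬ c = 0 → c = 1 := by decide
      refine n1 ⟨x, fun _ => y, z, ?_, ?_, ?_, ?_, F _ px, fun _ => F _ py, F _ pz⟩
      · rw [Finset.mem_Icc]; exact ⟨hx, le_trans (by omega) hz⟩
      · intro _; rw [Finset.mem_Icc]; exact ⟨hy, le_trans (show y ≤ z by omega) hz⟩
      · rw [Finset.mem_Icc]; exact ⟨by omega, hz⟩
      · rw [← Finset.sum_mul, hS]; exact he
  · rintro N ⟨hN, h⟩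
    by_contra hlt
    push Not at hlt
    have E0 : ∀ n, (if S < n ∧ n < (Q + 1) * (S + 1) then (0 : Fin 2) else 1) = 0 →
        S < n ∧ n < (Q + 1) * (S + 1) := by
      intro n hn; by_contra hc; rw [if_neg hc] at hn; exact absurd hn (by decide)
    have E1 : ∀ n, (if S < n ∧ n < (Q + 1) * (S + 1) then (0 : Fin 2) else 1) = 1 →
        ¬ (S < n ∧ n < (Q + 1) * (S + 1)) := by
      intro n hn hc; rw [if_pos hc] at hn; exact absurd hn (by decide)
    rcases h (fun n => if S < n ∧ n < (Q + 1) * (S + 1) then 0 else 1) with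
      ⟨x, y, z, hx, hy, hz, he, cx, cy, cz⟩ | ⟨x, y, z, hx, hy, hz, he, cx, cy, cz⟩
    · have := sum_ge a y (S + 1) fun i => (E0 _ (cy i)).1
      rw [hQ] at this
      have h1 := (E0 _ cx).1
      have h2 := (E0 _ cz).2
      nlinarith
    · have h1 := E1 _ cx
      have h2 := E1 _ cz
      have h3 := fun i => E1 _ (cy i)
      simp only [Finset.mem_Icc] at hx hy hz
      have h4 := sum_ge b y 1 fun i => (hy i).1
      rw [hS] at h4
      have hb' := fun j => hbb y hb (fun i => (hy i).1) j
      have hx' : x ≤ S := by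
        by_contra hc
        omega
      have hy' : ∀ i, y i ≤ S := by
        intro i
        by_contra hc
        have := hb' i
        have := h3 i
        omega
      have h5 := sum_le b y S hy'
      rw [hS] at h5
      have : z < (Q + 1) * (S + 1) := by nlinarith
      omega
end

section
/- For every positive integer q, the least positive integer N such that every 2-coloring χ of {1,…,N} admits x, y, z ∈ {1,…,N} with x + qy = z and χ(x) = χ(y) = χ(z) is N = q² + 3q + 1. -/
/-- Theorem 3.3 (Jones and Schaal): the 2-color Rado number of
`x + qy = z` is `q² + 3q + 1`. -/
theorem rado_number_x_add_qy (q : ℕ) (hq : 0 < q) :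
    IsLeast {N : ℕ | 0 < N ∧ ∀ χ : ℕ → Fin 2,
      ∃ x y z : ℕ, x ∈ Finset.Icc 1 N ∧ y ∈ Finset.Icc 1 N ∧
        z ∈ Finset.Icc 1 N ∧ x + q * y = z ∧ χ x = χ y ∧ χ y = χ z}
      (q ^ 2 + 3 * q + 1) := by
  constructor
  · refine ⟨by positivity, fun χ => ?_⟩
    by_contra hc
    have key : ∀ x y z : ℕ, 1 ≤ x → 1 ≤ y → y ≤ z → z ≤ q ^ 2 + 3 * q + 1 → x + q * y = z →
        ¬ (χ x = χ y ∧ χ y = χ z) := by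
      intro x y z hx hy hyz hz he hm
      have hxz : x ≤ z := by omega
      exact hc ⟨x, y, z, by simp; omega, by simp; omega, by simp; omega, he, hm.1, hm.2⟩
    have hq2 : 0 < q ^ 2 := by positivity
    have h1 := key 1 1 (q + 1) (by omega) (by omega) (by omega) (by omega) (by ring)
    have h2 := key (q + 1) (q + 1) (q ^ 2 + 2 * q + 1) (by omega) (by omega) (by omega)
      (by omega) (by ring)
    have h3 := key (q ^ 2 + 2 * q + 1) 1 (q ^ 2 + 3 * q + 1) (by omega) (by omega) (by omega)
      (by omega) (by ring)
    have h4 := key (q + 1) (q + 2) (q ^ 2 + 3 * q + 1) (by omega) (by omega) (by omega)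
      (by omega) (by ring)
    have h5 := key 2 1 (q + 2) (by omega) (by omega) (by omega) (by omega) (by ring)
    have h6 := key 2 2 (2 * q + 2) (by omega) (by omega) (by omega) (by omega) (by ring)
    have h7 := key (q + 2) 1 (2 * q + 2) (by omega) (by omega) (by omega) (by omega) (by ring)
    clear key hc
    simp only [Fin.ext_iff, true_and] at h1 h2 h3 h4 h5 h6 h7
    omega
  · rintro N ⟨hN, h⟩
    by_contra hlt
    push Not at hlt
    obtain ⟨x, y, z, hx, hy, hz, he, h1, h2⟩ :=
      h (fun n => if q + 1 ≤ n ∧ n ≤ q ^ 2 + 2 * q then 1 else 0)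
    simp only [Finset.mem_Icc] at hx hy hz
    have e1 : q ≤ q * y := Nat.le_mul_of_pos_right q hy.1
    have e2 : q + 1 ≤ y → q ^ 2 + q ≤ q * y := fun hh => by nlinarith
    have e3 : y ≤ q → q * y ≤ q ^ 2 := fun hh => by nlinarith
    have e4 : q ^ 2 + 2 * q + 1 ≤ y → q ^ 2 + 3 * q ≤ q * y := fun hh => by
      have : q * (q ^ 2 + 2 * q + 1) ≤ q * y := Nat.mul_le_mul_left q hh
      nlinarith [Nat.mul_le_mul_left (q^2) hq, Nat.mul_le_mul_left q hq]
    generalize q * y = t at *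
    generalize q ^ 2 = s at *
    split_ifs at h1 h2 <;> first | omega | simp at h1 | simp at h2
end

section
/- For every integer q ≥ 2, the least positive integer N such that every 2-coloring χ of {1,…,N} admits x, y, z ∈ {1,…,N} with 2x + qy = z and χ(x) = χ(y) = χ(z) is N = 2q² + 9q + 8. -/
theorem rado_upper_aux (q : ℕ) (hq : 2 ≤ q) (c : ℕ → Prop)
    (S : ∀ x y z : ℕ, 1 ≤ x → 1 ≤ y → z ≤ 2 * q ^ 2 + 9 * q + 8 → 2 * x + q * y = z →
      ¬ ((c x ↔ c y) ∧ (c y ↔ c z))) : False := by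
  obtain ⟨h, hh⟩ : ∃ h, q * q + q = 2 * h := by
    obtain ⟨h, hh⟩ := Nat.even_mul_succ_self q
    exact ⟨h, by rw [Nat.mul_succ] at hh; omega⟩
  have hN : ∀ z : ℕ, z ≤ 2 * (q * q) + 9 * q + 8 → z ≤ 2 * q ^ 2 + 9 * q + 8 := by
    intro z hz; rw [pow_two]; exact hz
  have hqq : 2 * q ≤ q * q := Nat.mul_le_mul_right q hq
  have h1 := S 1 1 (q + 2) (by omega) (by omega) (hN _ (by omega)) (by ring)
  by_cases hc : c q ↔ c 1
  · have hb : 3 * q ≤ q * q + 8 := by nlinarith [sq_nonneg ((q : ℤ) - 2)]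
    have a1 := S (q + 2) (q + 2) (q * q + 4 * q + 4) (by omega) (by omega) (hN _ (by omega)) (by ring)
    have a2 := S q 1 (3 * q) (by omega) (by omega) (hN _ (by omega)) (by ring)
    have a3 := S (3 * q) (q + 2) (q * q + 8 * q) (by omega) (by omega) (hN _ (by omega)) (by ring)
    have a4 := S q (q + 6) (q * q + 8 * q) (by omega) (by omega) (hN _ (by omega)) (by ring)
    have a5 := S (3 * q) (q + 6) (q * q + 12 * q) (by omega) (by omega) (hN _ (by omega)) (by ring)
    have a6 := S (6 * q) q (q * q + 12 * q) (by omega) (by omega) (hN _ (by omega)) (by ring)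
    have a7 := S (q * q + 4 * q + 4) 1 (2 * (q * q) + 9 * q + 8) (by omega) (by omega)
      (hN _ (by omega)) (by ring)
    have a8 := S (h + 3 * q + 4) (q + 2) (2 * (q * q) + 9 * q + 8) (by omega) (by omega)
      (hN _ (by omega)) (by linarith)
    have a9 := S (h + 3 * q + 4) 1 (q * q + 8 * q + 8) (by omega) (by omega)
      (hN _ (by omega)) (by linarith)
    have a10 := S (q + 4) (q + 6) (q * q + 8 * q + 8) (by omega) (by omega)
      (hN _ (by omega)) (by ring)
    have a11 := S 2 1 (q + 4) (by omega) (by omega) (hN _ (by omega)) (by ring)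
    have a12 := S (2 * q) (q + 4) (q * q + 8 * q) (by omega) (by omega) (hN _ (by omega)) (by ring)
    have a13 := S (2 * q) 2 (6 * q) (by omega) (by omega) (hN _ (by omega)) (by ring)
    clear S
    by_cases k : c 1 <;> grind
  · have a1 := S q q (q * q + 2 * q) (by omega) (by omega) (hN _ (by omega)) (by ring)
    have a2 := S (q * q + 2 * q) 1 (2 * (q * q) + 5 * q) (by omega) (by omega)
      (hN _ (by omega)) (by ring)
    have a3 := S q (q + 2) (q * q + 4 * q) (by omega) (by omega) (hN _ (by omega)) (by ring)
    have a4 := S (h + q) 1 (q * q + 4 * q) (by omega) (by omega) (hN _ (by omega)) (by linarith)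
    have a5 := S (h + q) (q + 2) (2 * (q * q) + 5 * q) (by omega) (by omega)
      (hN _ (by omega)) (by linarith)
    clear S
    by_cases k : c 1 <;> grind

/-- Theorem 3.4 (Hopkins and Schaal): for `q ≥ 2`, the 2-color Rado number of
`2x + qy = z` is `2q² + 9q + 8`. -/
theorem rado_number_two_x_add_qy (q : ℕ) (hq : 2 ≤ q) :
    IsLeast {N : ℕ | 0 < N ∧ ∀ χ : ℕ → Fin 2,
      ∃ x y z : ℕ, x ∈ Finset.Icc 1 N ∧ y ∈ Finset.Icc 1 N ∧
        z ∈ Finset.Icc 1 N ∧ 2 * x + q * y = z ∧ χ x = χ y ∧ χ y = χ z}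
      (2 * q ^ 2 + 9 * q + 8) := by
  constructor
  · refine ⟨by positivity, fun χ => ?_⟩
    by_contra hcon
    refine rado_upper_aux q hq (fun n => χ n = 0) ?_
    intro x y z hx hy hz hxyz ⟨e1, e2⟩
    have hqy : y ≤ q * y := Nat.le_mul_of_pos_left y (by omega)
    refine hcon ⟨x, y, z, ?_, ?_, ?_, hxyz, ?_, ?_⟩
    · rw [Finset.mem_Icc]; omega
    · rw [Finset.mem_Icc]; omega
    · rw [Finset.mem_Icc]; omega
    · omega
    · omega
  · rintro N ⟨-, hN⟩
    by_contra hlt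
    push Not at hlt
    obtain ⟨x, y, z, hx, hy, hz, hxyz, e1, e2⟩ :=
      hN (fun n => if q + 2 ≤ n ∧ n < (q + 2) * (q + 2) then 1 else 0)
    rw [Finset.mem_Icc] at hx hy hz
    have hz2 : 2 * x + q * y < 2 * ((q + 2) * (q + 2)) + q := by nlinarith
    have f1 : q ≤ q * y := Nat.le_mul_of_pos_right q (by omega)
    have hxb : x < (q + 2) * (q + 2) := by omega
    have hyb : y < (q + 2) * (q + 2) := by
      by_contra hy'
      have : q * ((q + 2) * (q + 2)) ≤ q * y := Nat.mul_le_mul_left q (by omega)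
      have h2 : 2 * ((q + 2) * (q + 2)) ≤ q * ((q + 2) * (q + 2)) := Nat.mul_le_mul_right _ hq
      have h3 : z < 2 * ((q + 2) * (q + 2)) + q := by omega
      rcases Nat.lt_or_ge q 3 with hq3 | hq3
      · -- q = 2
        obtain rfl : q = 2 := by omega
        omega
      · have h4 : 3 * ((q + 2) * (q + 2)) ≤ q * ((q + 2) * (q + 2)) := Nat.mul_le_mul_right _ hq3
        nlinarith
    by_cases cx : q + 2 ≤ x
    · have hyc : q + 2 ≤ y := by
        by_contra hy'
        rw [if_pos ⟨cx, hxb⟩, if_neg (by omega)] at e1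
        exact absurd e1 (by decide)
      have : q * (q + 2) ≤ q * y := Nat.mul_le_mul_left q hyc
      have : (q + 2) * (q + 2) ≤ z := by nlinarith
      rw [if_pos ⟨hyc, hyb⟩, if_neg (by omega)] at e2
      exact absurd e2 (by decide)
    · have hyc : ¬ q + 2 ≤ y := by
        intro hy'
        rw [if_neg (by omega), if_pos ⟨hy', hyb⟩] at e1
        exact absurd e1 (by decide)
      have : q * y ≤ q * (q + 1) := Nat.mul_le_mul_left q (by omega)
      have : z < (q + 2) * (q + 2) := by nlinarith
      rw [if_neg (by omega), if_pos ⟨by omega, this⟩] at e2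
      exact absurd e2 (by decide)
end

section
/- Let t ≥ 3 be an integer. Then there exists a 2-coloring χ : {1, …, 6t³ + 2t² + 4t − 1} → {0,1} admitting no solution x, y, z in {1,…,6t³+2t²+4t−1} to tx + (2t+1)y = z with χ(x) = χ(y) = χ(z) = 0 and no solution x, y, z to tx + ty = z with χ(x) = χ(y) = χ(z) = 1. Consequently RR_t(2t+1, t) ≥ 6t³ + 2t² + 4t. -/
/-- The elements of color 0. -/
def RRzero (t n : ℕ) : Prop :=
  n = 1 ∨ n = 2 ∨ n = 6 * t ∨ n = 6 * t + 1 ∨ (6 * t + 3 ≤ n ∧ n ≤ 6 * t ^ 2 + 2 * t) ∨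
    (6 * t ^ 2 + 2 * t < n ∧ t ∣ n ∧ (n ≤ 12 * t ^ 2 + t ∨ n = 12 * t ^ 2 + 4 * t))

theorem RRzero_small {t n : ℕ} (ht : 3 ≤ t) (h : RRzero t n) : n = 1 ∨ n = 2 ∨ 6 * t ≤ n := by
  unfold RRzero at h
  have : 3 * t ≤ t ^ 2 := by nlinarith
  omega

theorem RRzero_free {t x y : ℕ} (ht : 3 ≤ t) (hx : RRzero t x) (hy : RRzero t y)
    (hz : RRzero t (t * x + (2 * t + 1) * y)) : False := by
  have sx := RRzero_small ht hx
  have sy := RRzero_small ht hy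
  have hx1 : 1 ≤ x := by omega
  have hy1 : 1 ≤ y := by omega
  have key : t ∣ t * x + (2 * t + 1) * y → 12 * t ^ 2 + 6 * t < t * x + (2 * t + 1) * y := by
    intro h
    have h1 : t ∣ (2 * t + 1) * y := (Nat.dvd_add_right (dvd_mul_right t x)).1 h
    have h2 : t ∣ y := by
      have h3 : (2 * t + 1) * y = t * (2 * y) + y := by ring
      rw [h3] at h1
      exact (Nat.dvd_add_right (dvd_mul_right t _)).1 h1
    have h4 := Nat.le_of_dvd hy1 h2
    have h5 : 6 * t ≤ y := by omega
    nlinarith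
  have big : (x = 1 ∨ x = 2) ∧ (y = 1 ∨ y = 2) ∨
      6 * t ^ 2 + 2 * t < t * x + (2 * t + 1) * y := by
    by_cases h1 : 6 * t ≤ x
    · right; nlinarith
    · by_cases h2 : 6 * t ≤ y
      · right; nlinarith
      · left; omega
  have h3 : 3 * t ≤ t ^ 2 := by nlinarith
  rcases big with ⟨hx' | hx', hy' | hy'⟩ | big
  · subst hx' hy'
    unfold RRzero at hz; omega
  · subst hx' hy'
    unfold RRzero at hz; omega
  · subst hx' hy'
    unfold RRzero at hz; omega
  · subst hx' hy'
    unfold RRzero at hz; omega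
  · unfold RRzero at hz
    rcases hz with h | h | h | h | h | ⟨h, hd, hl⟩
    · omega
    · omega
    · omega
    · omega
    · omega
    · have := key hd
      omega

theorem RRone_free {t x y : ℕ} (ht : 3 ≤ t) (hx1 : 1 ≤ x) (hy1 : 1 ≤ y)
    (hN : t * x + t * y < 6 * t ^ 3 + 2 * t ^ 2 + 4 * t)
    (hx : ¬ RRzero t x) (hy : ¬ RRzero t y)
    (hz : ¬ RRzero t (t * x + t * y)) : False := by
  have x3 : 3 ≤ x := by unfold RRzero at hx; omega
  have y3 : 3 ≤ y := by unfold RRzero at hy; omega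
  have hxle : x ≤ 6 * t ^ 2 + 2 * t := by
    by_contra h
    push Not at h
    nlinarith
  have hyle : y ≤ 6 * t ^ 2 + 2 * t := by
    by_contra h
    push Not at h
    nlinarith
  have h3 : 3 * t ≤ t ^ 2 := by nlinarith
  have hx' : x ≤ 6 * t - 1 ∨ x = 6 * t + 2 := by unfold RRzero at hx; omega
  have hy' : y ≤ 6 * t - 1 ∨ y = 6 * t + 2 := by unfold RRzero at hy; omega
  apply hz
  have hs : x + y ≤ 12 * t + 1 ∨ x + y = 12 * t + 4 := by omega
  have h6 : 6 ≤ x + y := by omega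
  rw [← mul_add]
  generalize x + y = s at hs h6
  have hlow : 6 * t ≤ t * s := by nlinarith
  have hne : t * s ≠ 6 * t + 2 := by
    intro h
    have h1 : t ∣ 6 * t + 2 := h ▸ dvd_mul_right t s
    have h2 : t ∣ 2 := (Nat.dvd_add_right (dvd_mul_left t 6)).1 h1
    have := Nat.le_of_dvd (by norm_num) h2
    omega
  have hup : t * s ≤ 12 * t ^ 2 + t ∨ t * s = 12 * t ^ 2 + 4 * t := by
    rcases hs with h | h
    · left; nlinarith
    · right; subst h; ring
  have hd : t ∣ t * s := dvd_mul_right t s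
  unfold RRzero
  by_cases hb : 6 * t ^ 2 + 2 * t < t * s
  · exact Or.inr (Or.inr (Or.inr (Or.inr (Or.inr ⟨hb, hd, hup⟩))))
  · omega

theorem RR_main (t : ℕ) (ht : 3 ≤ t) : ∃ χ : ℕ → Fin 2,
    (∀ x y, χ x = 0 → χ y = 0 → χ (t * x + (2 * t + 1) * y) = 0 → False) ∧
    (∀ x y, 1 ≤ x → 1 ≤ y → t * x + t * y < 6 * t ^ 3 + 2 * t ^ 2 + 4 * t →
      χ x = 1 → χ y = 1 → χ (t * x + t * y) = 1 → False) := by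
  classical
  let χ : ℕ → Fin 2 := fun n => if RRzero t n then 0 else 1
  have h0 : ∀ n, χ n = 0 → RRzero t n := by
    intro n h
    by_contra hc
    simp [χ, hc] at h
  have h1 : ∀ n, χ n = 1 → ¬ RRzero t n := by
    intro n h hc
    simp [χ, hc] at h
  exact ⟨χ, fun x y a b c => RRzero_free ht (h0 _ a) (h0 _ b) (h0 _ c),
    fun x y a b n c d e => RRone_free ht a b n (h1 _ c) (h1 _ d) (h1 _ e)⟩

/-- Theorem 3.3 (second): for `t ≥ 3`, there is a 2-coloring of
`[1, 6t³+2t²+4t-1]` with no solution to `tx + (2t+1)y = z` monochromatic of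
color 0 and no solution to `tx + ty = z` monochromatic of color 1;
consequently `RR_t(2t+1, t) ≥ 6t³ + 2t² + 4t`. -/
theorem RR_lower_bound_anomalous (t : ℕ) (ht : 3 ≤ t) :
    (∃ χ : ℕ → Fin 2,
      (¬ ∃ x y z : ℕ,
        x ∈ Finset.Icc 1 (6 * t ^ 3 + 2 * t ^ 2 + 4 * t - 1) ∧
        y ∈ Finset.Icc 1 (6 * t ^ 3 + 2 * t ^ 2 + 4 * t - 1) ∧
        z ∈ Finset.Icc 1 (6 * t ^ 3 + 2 * t ^ 2 + 4 * t - 1) ∧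
        t * x + (2 * t + 1) * y = z ∧ χ x = 0 ∧ χ y = 0 ∧ χ z = 0) ∧
      (¬ ∃ x y z : ℕ,
        x ∈ Finset.Icc 1 (6 * t ^ 3 + 2 * t ^ 2 + 4 * t - 1) ∧
        y ∈ Finset.Icc 1 (6 * t ^ 3 + 2 * t ^ 2 + 4 * t - 1) ∧
        z ∈ Finset.Icc 1 (6 * t ^ 3 + 2 * t ^ 2 + 4 * t - 1) ∧
        t * x + t * y = z ∧ χ x = 1 ∧ χ y = 1 ∧ χ z = 1)) ∧
    (∀ M : ℕ, 0 < M →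
      (∀ χ : ℕ → Fin 2,
        (∃ x y z : ℕ, x ∈ Finset.Icc 1 M ∧ y ∈ Finset.Icc 1 M ∧
          z ∈ Finset.Icc 1 M ∧ t * x + (2 * t + 1) * y = z ∧
          χ x = 0 ∧ χ y = 0 ∧ χ z = 0) ∨
        (∃ x y z : ℕ, x ∈ Finset.Icc 1 M ∧ y ∈ Finset.Icc 1 M ∧
          z ∈ Finset.Icc 1 M ∧ t * x + t * y = z ∧
          χ x = 1 ∧ χ y = 1 ∧ χ z = 1)) →
      6 * t ^ 3 + 2 * t ^ 2 + 4 * t ≤ M) := by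
  obtain ⟨χ, hA, hB⟩ := RR_main t ht
  refine ⟨⟨χ, ?_, ?_⟩, ?_⟩
  · rintro ⟨x, y, z, -, -, -, rfl, a, b, c⟩
    exact hA x y a b c
  · rintro ⟨x, y, z, hx, hy, hz, rfl, a, b, c⟩
    rw [Finset.mem_Icc] at hx hy hz
    exact hB x y hx.1 hy.1 (by omega) a b c
  · intro M _ h
    by_contra hM
    rcases h χ with ⟨x, y, z, -, -, -, rfl, a, b, c⟩ | ⟨x, y, z, hx, hy, hz, rfl, a, b, c⟩
    · exact hA x y a b c
    · rw [Finset.mem_Icc] at hx hy hz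
      exact hB x y hx.1 hy.1 (by omega) a b c
end

section
/- There exists a 2-coloring χ : {1, …, 1392} → {0,1} admitting no solution x, y, z in {1,…,1392} to 6x + 13y = z with χ(x) = χ(y) = χ(z) = 0 and no solution x, y, z in {1,…,1392} to 6x + 6y = z with χ(x) = χ(y) = χ(z) = 1. Consequently RR_6(13,6) > 6·6³ + 2·6² + 4·6 = 1392. -/
/-- Bit mask of the set of color 1. -/
def rrMask : ℕ := 0x1ffffffffffffffffffffffffffffffffffffffffffffffffffffffffffffffffffffffffffffffffffffffffffffffffffffffffffffffffffffffffffffffffffffffffffffffffffffffffffffffffffffffffffffffffeffffffffeffffffffefbffbfffefbffbefbefbefbefbefbefbefbefbefbefbefbefbefbefbefbefbefbefbefbefbefbefbefbefbefbefbefbe00000000000000000000000000000000000000000020834dffffffff0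

theorem rr_aux0 : ∀ x < 232, rrMask.testBit x = false → ∀ y < (1392 - 6 * x) / 13 + 1,
    (rrMask.testBit y || rrMask.testBit (6 * x + 13 * y) || x.beq 0 || y.beq 0) = true := by
  decide +kernel

theorem rr_aux1 : ∀ x < 232, rrMask.testBit x = true → ∀ y < 233 - x,
    (rrMask.testBit y && rrMask.testBit (6 * x + 6 * y)) = false := by
  decide +kernel

theorem rr_col : ∃ χ : ℕ → Fin 2,
      (¬ ∃ x y z : ℕ, x ∈ Finset.Icc 1 1392 ∧ y ∈ Finset.Icc 1 1392 ∧
        z ∈ Finset.Icc 1 1392 ∧ 6 * x + 13 * y = z ∧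
        χ x = 0 ∧ χ y = 0 ∧ χ z = 0) ∧
      (¬ ∃ x y z : ℕ, x ∈ Finset.Icc 1 1392 ∧ y ∈ Finset.Icc 1 1392 ∧
        z ∈ Finset.Icc 1 1392 ∧ 6 * x + 6 * y = z ∧
        χ x = 1 ∧ χ y = 1 ∧ χ z = 1) := by
  have a0 : ∀ n, (if rrMask.testBit n = true then (1 : Fin 2) else 0) = 0 →
      rrMask.testBit n = false := by
    intro n h
    by_cases hb : rrMask.testBit n = true
    · simp [hb] at h
    · simpa using hb
  have a1 : ∀ n, (if rrMask.testBit n = true then (1 : Fin 2) else 0) = 1 →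
      rrMask.testBit n = true := by
    intro n h
    by_contra hb
    simp [hb] at h
  refine ⟨fun n => if rrMask.testBit n = true then 1 else 0, ?_, ?_⟩
  · rintro ⟨x, y, z, hx, hy, hz, rfl, h1, h2, h3⟩
    rw [Finset.mem_Icc] at hx hy hz
    have h := rr_aux0 x (by omega) (a0 _ h1) y (by omega)
    rw [a0 _ h2, a0 _ h3] at h
    simp only [Bool.or_eq_true, Nat.beq_eq, Nat.ble_eq, Bool.false_eq_true, false_or] at h
    omega
  · rintro ⟨x, y, z, hx, hy, hz, rfl, h1, h2, h3⟩
    rw [Finset.mem_Icc] at hx hy hz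
    have h := rr_aux1 x (by omega) (a1 _ h1) y (by omega)
    rw [a1 _ h2, a1 _ h3] at h
    simp at h

/-- Remark after Theorem 3.3: there is a 2-coloring of `[1,1392]` with no
solution to `6x + 13y = z` monochromatic of color 0 and no solution to
`6x + 6y = z` monochromatic of color 1; consequently `RR_6(13,6) > 1392`. -/
theorem RR_six_thirteen_six_gt :
    (∃ χ : ℕ → Fin 2,
      (¬ ∃ x y z : ℕ, x ∈ Finset.Icc 1 1392 ∧ y ∈ Finset.Icc 1 1392 ∧
        z ∈ Finset.Icc 1 1392 ∧ 6 * x + 13 * y = z ∧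
        χ x = 0 ∧ χ y = 0 ∧ χ z = 0) ∧
      (¬ ∃ x y z : ℕ, x ∈ Finset.Icc 1 1392 ∧ y ∈ Finset.Icc 1 1392 ∧
        z ∈ Finset.Icc 1 1392 ∧ 6 * x + 6 * y = z ∧
        χ x = 1 ∧ χ y = 1 ∧ χ z = 1)) ∧
    (∀ M : ℕ, 0 < M →
      (∀ χ : ℕ → Fin 2,
        (∃ x y z : ℕ, x ∈ Finset.Icc 1 M ∧ y ∈ Finset.Icc 1 M ∧
          z ∈ Finset.Icc 1 M ∧ 6 * x + 13 * y = z ∧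
          χ x = 0 ∧ χ y = 0 ∧ χ z = 0) ∨
        (∃ x y z : ℕ, x ∈ Finset.Icc 1 M ∧ y ∈ Finset.Icc 1 M ∧
          z ∈ Finset.Icc 1 M ∧ 6 * x + 6 * y = z ∧
          χ x = 1 ∧ χ y = 1 ∧ χ z = 1)) →
      1392 < M) := by
  refine ⟨rr_col, ?_⟩
  intro M _ hM
  by_contra hlt
  obtain ⟨χ, c0, c1⟩ := rr_col
  have hsub : ∀ n, n ∈ Finset.Icc 1 M → n ∈ Finset.Icc 1 1392 := by
    intro n hn
    rw [Finset.mem_Icc] at hn ⊢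
    omega
  rcases hM χ with ⟨x, y, z, hx, hy, hz, h⟩ | ⟨x, y, z, hx, hy, hz, h⟩
  · exact c0 ⟨x, y, z, hsub _ hx, hsub _ hy, hsub _ hz, h⟩
  · exact c1 ⟨x, y, z, hsub _ hx, hsub _ hy, hsub _ hz, h⟩
end

section
/- RR_2(5,3) = 73. That is, 73 is the least positive integer N such that every 2-coloring χ of {1,…,N} admits x, y, z ∈ {1,…,N} with 2x + 5y = z and χ(x) = χ(y) = χ(z) = 0, or x, y, z ∈ {1,…,N} with 2x + 3y = z and χ(x) = χ(y) = χ(z) = 1. -/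
theorem upper (χ : ℕ → Fin 2)
    (ha : ∀ x y z : ℕ, (1 ≤ x ∧ x ≤ 73) → (1 ≤ y ∧ y ≤ 73) → (1 ≤ z ∧ z ≤ 73) →
      2 * x + 5 * y = z → χ x = 0 → χ y = 0 → χ z = 0 → False)
    (hb : ∀ x y z : ℕ, (1 ≤ x ∧ x ≤ 73) → (1 ≤ y ∧ y ≤ 73) → (1 ≤ z ∧ z ≤ 73) →
      2 * x + 3 * y = z → χ x = 1 → χ y = 1 → χ z = 1 → False) : False := by
  have n0 : ∀ n, ¬ χ n = 0 → χ n = 1 := fun n h => by omega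
  have n1 : ∀ n, ¬ χ n = 1 → χ n = 0 := fun n h => by omega
  have cases1 : χ 1 = 0 ∨ χ 1 = 1 := by omega
  rcases cases1 with h1 | h1
  · have h7 : χ 7 = 1 := n0 _ fun h => ha 1 1 7 (by decide) (by decide) (by decide) (by decide) h1 h1 h
    have h35 : χ 35 = 0 := n1 _ fun h => hb 7 7 35 (by decide) (by decide) (by decide) (by decide) h7 h7 h
    have h15 : χ 15 = 1 := n0 _ fun h => ha 15 1 35 (by decide) (by decide) (by decide) (by decide) h h1 h35
    have h51 : χ 51 = 0 := n1 _ fun h => hb 15 7 51 (by decide) (by decide) (by decide) (by decide) h15 h7 h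
    have h23 : χ 23 = 1 := n0 _ fun h => ha 23 1 51 (by decide) (by decide) (by decide) (by decide) h h1 h51
    have h67 : χ 67 = 0 := n1 _ fun h => hb 23 7 67 (by decide) (by decide) (by decide) (by decide) h23 h7 h
    have h31 : χ 31 = 1 := n0 _ fun h => ha 31 1 67 (by decide) (by decide) (by decide) (by decide) h h1 h67
    have h5 : χ 5 = 1 := n0 _ fun h => ha 5 5 35 (by decide) (by decide) (by decide) (by decide) h h h35
    exact hb 5 7 31 (by decide) (by decide) (by decide) (by decide) h5 h7 h31
  · have h5 : χ 5 = 0 := n1 _ fun h => hb 1 1 5 (by decide) (by decide) (by decide) (by decide) h1 h1 h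
    have h35 : χ 35 = 1 := n0 _ fun h => ha 5 5 35 (by decide) (by decide) (by decide) (by decide) h5 h5 h
    have h7 : χ 7 = 0 := n1 _ fun h => hb 7 7 35 (by decide) (by decide) (by decide) (by decide) h h h35
    have h11 : χ 11 = 0 := n1 _ fun h => hb 1 11 35 (by decide) (by decide) (by decide) (by decide) h1 h h35
    have h45 : χ 45 = 1 := n0 _ fun h => ha 5 7 45 (by decide) (by decide) (by decide) (by decide) h5 h7 h
    have h73 : χ 73 = 0 := n1 _ fun h => hb 35 1 73 (by decide) (by decide) (by decide) (by decide) h35 h1 h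
    have h9 : χ 9 = 0 := n1 _ fun h => hb 9 9 45 (by decide) (by decide) (by decide) (by decide) h h h45
    exact ha 9 11 73 (by decide) (by decide) (by decide) (by decide) h9 h11 h73

/-- `RR_2(5,3) = 73`: the least positive `N` such that every 2-coloring of
`{1,…,N}` admits a solution to `2x + 5y = z` monochromatic of color 0 or a
solution to `2x + 3y = z` monochromatic of color 1 is `73`. -/
theorem RR_2_5_3 :
    IsLeast {N : ℕ | 0 < N ∧ ∀ χ : ℕ → Fin 2,
      (∃ x y z : ℕ, x ∈ Finset.Icc 1 N ∧ y ∈ Finset.Icc 1 N ∧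
        z ∈ Finset.Icc 1 N ∧ 2 * x + 5 * y = z ∧ χ x = 0 ∧ χ y = 0 ∧ χ z = 0) ∨
      (∃ x y z : ℕ, x ∈ Finset.Icc 1 N ∧ y ∈ Finset.Icc 1 N ∧
        z ∈ Finset.Icc 1 N ∧ 2 * x + 3 * y = z ∧ χ x = 1 ∧ χ y = 1 ∧ χ z = 1)}
      73 := by
  refine ⟨⟨by norm_num, fun χ => ?_⟩, ?_⟩
  · by_contra hcon
    rw [not_or] at hcon
    obtain ⟨p, q⟩ := hcon
    refine upper χ ?_ ?_
    · intro x y z hx hy hz h a b c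
      exact p ⟨x, y, z, Finset.mem_Icc.2 hx, Finset.mem_Icc.2 hy, Finset.mem_Icc.2 hz, h, a, b, c⟩
    · intro x y z hx hy hz h a b c
      exact q ⟨x, y, z, Finset.mem_Icc.2 hx, Finset.mem_Icc.2 hy, Finset.mem_Icc.2 hz, h, a, b, c⟩
  · rintro N ⟨_, h⟩
    by_contra hN
    rcases h (fun n => if (5 ≤ n ∧ n ≤ 34) ∨ n = 36 ∨ n = 38 then 0 else 1) with
      ⟨x, y, z, hx, hy, hz, e, a, b, c⟩ | ⟨x, y, z, hx, hy, hz, e, a, b, c⟩ <;>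
    · simp only [Finset.mem_Icc] at hx hy hz
      simp at a b c
      omega
end

section
/- RR_3(4,3) = 129. That is, 129 is the least positive integer N such that every 2-coloring χ of {1,…,N} admits x, y, z ∈ {1,…,N} with 3x + 4y = z and χ(x) = χ(y) = χ(z) = 0, or x, y, z ∈ {1,…,N} with 3x + 3y = z and χ(x) = χ(y) = χ(z) = 1. -/
/-- `RR_3(4,3) = 129`: the least positive `N` such that every 2-coloring of
`{1,…,N}` admits a solution to `3x + 4y = z` monochromatic of color 0 or a
solution to `3x + 3y = z` monochromatic of color 1 is `129`. -/
theorem RR_3_4_3 :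
    IsLeast {N : ℕ | 0 < N ∧ ∀ χ : ℕ → Fin 2,
      (∃ x y z : ℕ, x ∈ Finset.Icc 1 N ∧ y ∈ Finset.Icc 1 N ∧
        z ∈ Finset.Icc 1 N ∧ 3 * x + 4 * y = z ∧ χ x = 0 ∧ χ y = 0 ∧ χ z = 0) ∨
      (∃ x y z : ℕ, x ∈ Finset.Icc 1 N ∧ y ∈ Finset.Icc 1 N ∧
        z ∈ Finset.Icc 1 N ∧ 3 * x + 3 * y = z ∧ χ x = 1 ∧ χ y = 1 ∧ χ z = 1)}
      129 := by
  constructor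
  · refine ⟨by norm_num, fun χ => ?_⟩
    by_contra hc
    rw [not_or] at hc
    obtain ⟨ha, hb⟩ := hc
    have h0 : ∀ x y z : ℕ, 1 ≤ x → 1 ≤ y → z ≤ 129 → 3 * x + 4 * y = z →
        χ x = 0 → χ y = 0 → χ z = 0 → False := by
      intro x y z hx hy hz he a b c
      exact ha ⟨x, y, z, by rw [Finset.mem_Icc]; omega, by rw [Finset.mem_Icc]; omega,
        by rw [Finset.mem_Icc]; omega, he, a, b, c⟩
    have h1 : ∀ x y z : ℕ, 1 ≤ x → 1 ≤ y → z ≤ 129 → 3 * x + 3 * y = z →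
        χ x = 1 → χ y = 1 → χ z = 1 → False := by
      intro x y z hx hy hz he a b c
      exact hb ⟨x, y, z, by rw [Finset.mem_Icc]; omega, by rw [Finset.mem_Icc]; omega,
        by rw [Finset.mem_Icc]; omega, he, a, b, c⟩
    have f1 : ∀ n, (χ n = 0 → False) → χ n = 1 := fun n h => by
      generalize χ n = a at h ⊢
      revert h; revert a; decide
    have f0 : ∀ n, (χ n = 1 → False) → χ n = 0 := fun n h => by
      generalize χ n = a at h ⊢
      revert h; revert a; decide
    by_cases c2 : χ 2 = 0
    · have c14 : χ 14 = 1 := f1 _ fun h => h0 2 2 14 (by norm_num) (by norm_num) (by norm_num) (by norm_num) c2 c2 h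
      have c84 : χ 84 = 0 := f0 _ fun h => h1 14 14 84 (by norm_num) (by norm_num) (by norm_num) (by norm_num) c14 c14 h
      have c12 : χ 12 = 1 := f1 _ fun h => h0 12 12 84 (by norm_num) (by norm_num) (by norm_num) (by norm_num) h h c84
      have c72 : χ 72 = 0 := f0 _ fun h => h1 12 12 72 (by norm_num) (by norm_num) (by norm_num) (by norm_num) c12 c12 h
      have c78 : χ 78 = 0 := f0 _ fun h => h1 12 14 78 (by norm_num) (by norm_num) (by norm_num) (by norm_num) c12 c14 h
      have c18 : χ 18 = 1 := f1 _ fun h => h0 2 18 78 (by norm_num) (by norm_num) (by norm_num) (by norm_num) c2 h c78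
      have c3 : χ 3 = 0 := f0 _ fun h => h1 3 3 18 (by norm_num) (by norm_num) (by norm_num) (by norm_num) h h c18
      have c96 : χ 96 = 0 := f0 _ fun h => h1 14 18 96 (by norm_num) (by norm_num) (by norm_num) (by norm_num) c14 c18 h
      have c20 : χ 20 = 1 := f1 _ fun h => h0 20 3 72 (by norm_num) (by norm_num) (by norm_num) (by norm_num) h c3 c72
      have c120 : χ 120 = 0 := f0 _ fun h => h1 20 20 120 (by norm_num) (by norm_num) (by norm_num) (by norm_num) c20 c20 h
      have c24 : χ 24 = 1 := f1 _ fun h => h0 24 3 84 (by norm_num) (by norm_num) (by norm_num) (by norm_num) h c3 c84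
      have c28 : χ 28 = 1 := f1 _ fun h => h0 28 3 96 (by norm_num) (by norm_num) (by norm_num) (by norm_num) h c3 c96
      have c36 : χ 36 = 1 := f1 _ fun h => h0 36 3 120 (by norm_num) (by norm_num) (by norm_num) (by norm_num) h c3 c120
      have c4 : χ 4 = 0 := f0 _ fun h => h1 4 4 24 (by norm_num) (by norm_num) (by norm_num) (by norm_num) h h c24
      have c15 : χ 15 = 1 := f1 _ fun h => h0 4 15 72 (by norm_num) (by norm_num) (by norm_num) (by norm_num) c4 h c72
      have c6 : χ 6 = 0 := f0 _ fun h => h1 6 6 36 (by norm_num) (by norm_num) (by norm_num) (by norm_num) h h c36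
      have c129 : χ 129 = 0 := f0 _ fun h => h1 15 28 129 (by norm_num) (by norm_num) (by norm_num) (by norm_num) c15 c28 h
      have c39 : χ 39 = 1 := f1 _ fun h => h0 39 3 129 (by norm_num) (by norm_num) (by norm_num) (by norm_num) h c3 c129
      have c1 : χ 1 = 0 := f0 _ fun h => h1 1 12 39 (by norm_num) (by norm_num) (by norm_num) (by norm_num) h c12 c39
      have c42 : χ 42 = 1 := f1 _ fun h => h0 6 6 42 (by norm_num) (by norm_num) (by norm_num) (by norm_num) c6 c6 h
      have c7 : χ 7 = 0 := f0 _ fun h => h1 7 7 42 (by norm_num) (by norm_num) (by norm_num) (by norm_num) h h c42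
      exact h0 1 1 7 (by norm_num) (by norm_num) (by norm_num) (by norm_num) c1 c1 c7
    · replace c2 := f1 2 c2
      have c12 : χ 12 = 0 := f0 _ fun h => h1 2 2 12 (by norm_num) (by norm_num) (by norm_num) (by norm_num) c2 c2 h
      have c84 : χ 84 = 1 := f1 _ fun h => h0 12 12 84 (by norm_num) (by norm_num) (by norm_num) (by norm_num) c12 c12 h
      have c26 : χ 26 = 0 := f0 _ fun h => h1 2 26 84 (by norm_num) (by norm_num) (by norm_num) (by norm_num) c2 h c84
      have c126 : χ 126 = 1 := f1 _ fun h => h0 26 12 126 (by norm_num) (by norm_num) (by norm_num) (by norm_num) c26 c12 h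
      have c40 : χ 40 = 0 := f0 _ fun h => h1 2 40 126 (by norm_num) (by norm_num) (by norm_num) (by norm_num) c2 h c126
      have c1 : χ 1 = 1 := f1 _ fun h => h0 12 1 40 (by norm_num) (by norm_num) (by norm_num) (by norm_num) c12 h c40
      have c6 : χ 6 = 0 := f0 _ fun h => h1 1 1 6 (by norm_num) (by norm_num) (by norm_num) (by norm_num) c1 c1 h
      have c27 : χ 27 = 0 := f0 _ fun h => h1 1 27 84 (by norm_num) (by norm_num) (by norm_num) (by norm_num) c1 h c84
      have c42 : χ 42 = 1 := f1 _ fun h => h0 6 6 42 (by norm_num) (by norm_num) (by norm_num) (by norm_num) c6 c6 h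
      have c7 : χ 7 = 0 := f0 _ fun h => h1 7 7 42 (by norm_num) (by norm_num) (by norm_num) (by norm_num) h h c42
      have c129 : χ 129 = 1 := f1 _ fun h => h0 7 27 129 (by norm_num) (by norm_num) (by norm_num) (by norm_num) c7 c27 h
      exact h1 1 42 129 (by norm_num) (by norm_num) (by norm_num) (by norm_num) c1 c42 c129
  · rintro N ⟨_, h⟩
    by_contra hN
    have h := h (fun v => if 6 ≤ v ∧ v ≤ 41 then 0 else 1)
    simp only [Finset.mem_Icc, ite_eq_left_iff, ite_eq_right_iff, one_ne_zero, zero_ne_one,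
      imp_false, not_not] at h
    rcases h with ⟨x, y, z, h⟩ | ⟨x, y, z, h⟩ <;> omega
end

section
/- RR_3(7,3) = 192. That is, 192 is the least positive integer N such that every 2-coloring χ of {1,…,N} admits x, y, z ∈ {1,…,N} with 3x + 7y = z and χ(x) = χ(y) = χ(z) = 0, or x, y, z ∈ {1,…,N} with 3x + 3y = z and χ(x) = χ(y) = χ(z) = 1. -/
theorem RR_upper (p : ℕ → Prop)
    (h0 : ∀ x y : ℕ, 1 ≤ x → 1 ≤ y → 3 * x + 7 * y ≤ 192 → ¬ (¬ p x ∧ ¬ p y ∧ ¬ p (3 * x + 7 * y)))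
    (h1 : ∀ x y : ℕ, 1 ≤ x → 1 ≤ y → 3 * x + 3 * y ≤ 192 → ¬ (p x ∧ p y ∧ p (3 * x + 3 * y))) :
    False := by
  have k0 := h0 1 1 (by norm_num) (by norm_num) (by norm_num)
  have k1 := h0 18 1 (by norm_num) (by norm_num) (by norm_num)
  have k2 := h0 1 27 (by norm_num) (by norm_num) (by norm_num)
  have k3 := h0 6 2 (by norm_num) (by norm_num) (by norm_num)
  have k4 := h0 5 3 (by norm_num) (by norm_num) (by norm_num)
  have k5 := h0 3 3 (by norm_num) (by norm_num) (by norm_num)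
  have k6 := h0 19 6 (by norm_num) (by norm_num) (by norm_num)
  have k7 := h0 6 6 (by norm_num) (by norm_num) (by norm_num)
  have k8 := h0 19 18 (by norm_num) (by norm_num) (by norm_num)
  have k9 := h1 1 1 (by norm_num) (by norm_num) (by norm_num)
  have k10 := h1 1 19 (by norm_num) (by norm_num) (by norm_num)
  have k11 := h1 1 32 (by norm_num) (by norm_num) (by norm_num)
  have k12 := h1 1 60 (by norm_num) (by norm_num) (by norm_num)
  have k13 := h1 2 18 (by norm_num) (by norm_num) (by norm_num)
  have k14 := h1 3 6 (by norm_num) (by norm_num) (by norm_num)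
  have k15 := h1 3 3 (by norm_num) (by norm_num) (by norm_num)
  have k16 := h1 3 61 (by norm_num) (by norm_num) (by norm_num)
  have k17 := h1 5 5 (by norm_num) (by norm_num) (by norm_num)
  have k18 := h1 6 6 (by norm_num) (by norm_num) (by norm_num)
  have k19 := h1 10 10 (by norm_num) (by norm_num) (by norm_num)
  clear h0 h1
  norm_num only at *
  by_cases c1 : p 1 <;> by_cases c3 : p 3 <;> simp_all only [not_true_eq_false, not_false_eq_true, true_and, and_true, false_and, and_false, not_not, and_self]

def colMask : ℕ := 6178830031247878982768828594862850107696541160822396944376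

set_option synthInstance.maxHeartbeats 400000 in
set_option synthInstance.maxSize 2000 in
theorem RR_low0 : ∀ x < 64, ∀ y < 28, 1 ≤ x → 1 ≤ y → 3 * x + 7 * y ≤ 191 →
    ¬ (colMask.testBit x = false ∧ colMask.testBit y = false ∧
      colMask.testBit (3 * x + 7 * y) = false) := by
  decide +kernel

set_option synthInstance.maxHeartbeats 400000 in
set_option synthInstance.maxSize 2000 in
theorem RR_low1 : ∀ x < 64, ∀ y < 64, 1 ≤ x → 1 ≤ y → 3 * x + 3 * y ≤ 191 →
    ¬ (colMask.testBit x = true ∧ colMask.testBit y = true ∧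
      colMask.testBit (3 * x + 3 * y) = true) := by
  decide +kernel

/-- `RR_3(7,3) = 192`: the least positive `N` such that every 2-coloring of
`{1,…,N}` admits a solution to `3x + 7y = z` monochromatic of color 0 or a
solution to `3x + 3y = z` monochromatic of color 1 is `192`. -/
theorem RR_3_7_3 :
    IsLeast {N : ℕ | 0 < N ∧ ∀ χ : ℕ → Fin 2,
      (∃ x y z : ℕ, x ∈ Finset.Icc 1 N ∧ y ∈ Finset.Icc 1 N ∧
        z ∈ Finset.Icc 1 N ∧ 3 * x + 7 * y = z ∧ χ x = 0 ∧ χ y = 0 ∧ χ z = 0) ∨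
      (∃ x y z : ℕ, x ∈ Finset.Icc 1 N ∧ y ∈ Finset.Icc 1 N ∧
        z ∈ Finset.Icc 1 N ∧ 3 * x + 3 * y = z ∧ χ x = 1 ∧ χ y = 1 ∧ χ z = 1)}
      192 := by
  constructor
  · refine ⟨by norm_num, fun χ => ?_⟩
    by_contra hc
    push Not at hc
    obtain ⟨ha, hb⟩ := hc
    have two : ∀ n, ¬ χ n = 1 → χ n = 0 := fun n hn => by omega
    refine RR_upper (fun n => χ n = 1) ?_ ?_
    · rintro x y hx hy hz ⟨a, b, c⟩
      exact ha x y _ (Finset.mem_Icc.2 ⟨hx, by omega⟩) (Finset.mem_Icc.2 ⟨hy, by omega⟩)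
        (Finset.mem_Icc.2 ⟨by omega, hz⟩) rfl (two _ a) (two _ b) (two _ c)
    · rintro x y hx hy hz ⟨a, b, c⟩
      exact hb x y _ (Finset.mem_Icc.2 ⟨hx, by omega⟩) (Finset.mem_Icc.2 ⟨hy, by omega⟩)
        (Finset.mem_Icc.2 ⟨by omega, hz⟩) rfl a b c
  · rintro N ⟨_, hN⟩
    by_contra hlt
    have e0 : ∀ n, (if colMask.testBit n then (1 : Fin 2) else 0) = 0 →
        colMask.testBit n = false := by
      intro n h
      cases hh : colMask.testBit n <;> simp_all
    have e1 : ∀ n, (if colMask.testBit n then (1 : Fin 2) else 0) = 1 →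
        colMask.testBit n = true := by
      intro n h
      cases hh : colMask.testBit n <;> simp_all
    rcases hN (fun n => if colMask.testBit n then 1 else 0) with
      ⟨x, y, z, hx, hy, hz, rfl, a, b, c⟩ | ⟨x, y, z, hx, hy, hz, rfl, a, b, c⟩ <;>
      rw [Finset.mem_Icc] at hx hy hz
    · exact RR_low0 x (by omega) y (by omega) hx.1 hy.1 (by omega) ⟨e0 _ a, e0 _ b, e0 _ c⟩
    · exact RR_low1 x (by omega) y (by omega) hx.1 hy.1 (by omega) ⟨e1 _ a, e1 _ b, e1 _ c⟩
end

section
/- RR_4(9,4) = 432. That is, 432 is the least positive integer N such that every 2-coloring χ of {1,…,N} admits x, y, z ∈ {1,…,N} with 4x + 9y = z and χ(x) = χ(y) = χ(z) = 0, or x, y, z ∈ {1,…,N} with 4x + 4y = z and χ(x) = χ(y) = χ(z) = 1. -/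
theorem upper_core (P : ℕ → Prop)
    (A : ∀ x y z : ℕ, 4 * x + 9 * y = z → 1 ≤ x → 1 ≤ y → z ≤ 432 → ¬ (¬ P x ∧ ¬ P y ∧ ¬ P z))
    (B : ∀ x y z : ℕ, 4 * x + 4 * y = z → 1 ≤ x → 1 ≤ y → z ≤ 432 → ¬ (P x ∧ P y ∧ P z)) :
    False := by
  by_cases h1 : P 1
  ·
    have h8 : ¬ P 8 := by
      have := B 1 1 8 (by norm_num) (by norm_num) (by norm_num) (by norm_num)
      simpa [h1] using this
    have h104 : P 104 := by
      have := A 8 8 104 (by norm_num) (by norm_num) (by norm_num) (by norm_num)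
      simpa [h8] using this
    have h25 : ¬ P 25 := by
      have := B 25 1 104 (by norm_num) (by norm_num) (by norm_num) (by norm_num)
      simpa [h1, h104] using this
    have h13 : ¬ P 13 := by
      have := B 13 13 104 (by norm_num) (by norm_num) (by norm_num) (by norm_num)
      simpa [h104] using this
    have h420 : ¬ P 420 := by
      have := B 104 1 420 (by norm_num) (by norm_num) (by norm_num) (by norm_num)
      simpa [h1, h104] using this
    have h172 : P 172 := by
      have := A 25 8 172 (by norm_num) (by norm_num) (by norm_num) (by norm_num)
      simpa [h8, h25] using this
    have h124 : P 124 := by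
      have := A 13 8 124 (by norm_num) (by norm_num) (by norm_num) (by norm_num)
      simpa [h8, h13] using this
    have h42 : ¬ P 42 := by
      have := B 1 42 172 (by norm_num) (by norm_num) (by norm_num) (by norm_num)
      simpa [h1, h172] using this
    have h28 : P 28 := by
      have := A 42 28 420 (by norm_num) (by norm_num) (by norm_num) (by norm_num)
      simpa [h42, h420] using this
    have h240 : P 240 := by
      have := A 42 8 240 (by norm_num) (by norm_num) (by norm_num) (by norm_num)
      simpa [h8, h42] using this
    have h3 : ¬ P 3 := by
      have := B 3 28 124 (by norm_num) (by norm_num) (by norm_num) (by norm_num)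
      simpa [h28, h124] using this
    have h59 : ¬ P 59 := by
      have := B 1 59 240 (by norm_num) (by norm_num) (by norm_num) (by norm_num)
      simpa [h1, h240] using this
    exact absurd (A 8 3 59 (by norm_num) (by norm_num) (by norm_num) (by norm_num)) (by simp [h3, h8, h59])
  · by_cases h3 : P 3
    ·
      have h13 : P 13 := by
        have := A 1 1 13 (by norm_num) (by norm_num) (by norm_num) (by norm_num)
        simpa [h1] using this
      have h24 : ¬ P 24 := by
        have := B 3 3 24 (by norm_num) (by norm_num) (by norm_num) (by norm_num)
        simpa [h3] using this
      have h105 : P 105 := by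
        have := A 24 1 105 (by norm_num) (by norm_num) (by norm_num) (by norm_num)
        simpa [h1, h24] using this
      have h312 : P 312 := by
        have := A 24 24 312 (by norm_num) (by norm_num) (by norm_num) (by norm_num)
        simpa [h24] using this
      have h220 : P 220 := by
        have := A 1 24 220 (by norm_num) (by norm_num) (by norm_num) (by norm_num)
        simpa [h1, h24] using this
      have h432 : ¬ P 432 := by
        have := B 105 3 432 (by norm_num) (by norm_num) (by norm_num) (by norm_num)
        simpa [h3, h105] using this
      have h65 : ¬ P 65 := by
        have := B 65 13 312 (by norm_num) (by norm_num) (by norm_num) (by norm_num)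
        simpa [h13, h312] using this
      have h52 : ¬ P 52 := by
        have := B 3 52 220 (by norm_num) (by norm_num) (by norm_num) (by norm_num)
        simpa [h3, h220] using this
      have h5 : P 5 := by
        have := A 5 5 65 (by norm_num) (by norm_num) (by norm_num) (by norm_num)
        simpa [h65] using this
      have h4 : P 4 := by
        have := A 4 4 52 (by norm_num) (by norm_num) (by norm_num) (by norm_num)
        simpa [h52] using this
      have h36 : ¬ P 36 := by
        have := B 4 5 36 (by norm_num) (by norm_num) (by norm_num) (by norm_num)
        simpa [h4, h5] using this
      have h32 : ¬ P 32 := by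
        have := B 3 5 32 (by norm_num) (by norm_num) (by norm_num) (by norm_num)
        simpa [h3, h5] using this
      exact absurd (A 36 32 432 (by norm_num) (by norm_num) (by norm_num) (by norm_num)) (by simp [h32, h36, h432])
    ·
      have h31 : P 31 := by
        have := A 1 3 31 (by norm_num) (by norm_num) (by norm_num) (by norm_num)
        simpa [h1, h3] using this
      have h13 : P 13 := by
        have := A 1 1 13 (by norm_num) (by norm_num) (by norm_num) (by norm_num)
        simpa [h1] using this
      have h21 : P 21 := by
        have := A 3 1 21 (by norm_num) (by norm_num) (by norm_num) (by norm_num)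
        simpa [h1, h3] using this
      have h39 : P 39 := by
        have := A 3 3 39 (by norm_num) (by norm_num) (by norm_num) (by norm_num)
        simpa [h3] using this
      have h208 : ¬ P 208 := by
        have := B 21 31 208 (by norm_num) (by norm_num) (by norm_num) (by norm_num)
        simpa [h21, h31] using this
      have h104 : ¬ P 104 := by
        have := B 13 13 104 (by norm_num) (by norm_num) (by norm_num) (by norm_num)
        simpa [h13] using this
      have h16 : P 16 := by
        have := A 16 16 208 (by norm_num) (by norm_num) (by norm_num) (by norm_num)
        simpa [h208] using this
      have h8 : P 8 := by
        have := A 8 8 104 (by norm_num) (by norm_num) (by norm_num) (by norm_num)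
        simpa [h104] using this
      have h96 : ¬ P 96 := by
        have := B 16 8 96 (by norm_num) (by norm_num) (by norm_num) (by norm_num)
        simpa [h8, h16] using this
      have h2 : ¬ P 2 := by
        have := B 2 2 16 (by norm_num) (by norm_num) (by norm_num) (by norm_num)
        simpa [h16] using this
      have h35 : P 35 := by
        have := A 2 3 35 (by norm_num) (by norm_num) (by norm_num) (by norm_num)
        simpa [h2, h3] using this
      have h30 : P 30 := by
        have := A 3 2 30 (by norm_num) (by norm_num) (by norm_num) (by norm_num)
        simpa [h2, h3] using this
      have h264 : ¬ P 264 := by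
        have := B 35 31 264 (by norm_num) (by norm_num) (by norm_num) (by norm_num)
        simpa [h31, h35] using this
      have h260 : ¬ P 260 := by
        have := B 35 30 260 (by norm_num) (by norm_num) (by norm_num) (by norm_num)
        simpa [h30, h35] using this
      have h296 : ¬ P 296 := by
        have := B 35 39 296 (by norm_num) (by norm_num) (by norm_num) (by norm_num)
        simpa [h35, h39] using this
      have h28 : P 28 := by
        have := A 3 28 264 (by norm_num) (by norm_num) (by norm_num) (by norm_num)
        simpa [h3, h264] using this
      have h32 : P 32 := by
        have := A 2 32 296 (by norm_num) (by norm_num) (by norm_num) (by norm_num)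
        simpa [h2, h296] using this
      have h232 : ¬ P 232 := by
        have := B 28 30 232 (by norm_num) (by norm_num) (by norm_num) (by norm_num)
        simpa [h28, h30] using this
      have h4 : ¬ P 4 := by
        have := B 4 4 32 (by norm_num) (by norm_num) (by norm_num) (by norm_num)
        simpa [h32] using this
      have h49 : P 49 := by
        have := A 49 4 232 (by norm_num) (by norm_num) (by norm_num) (by norm_num)
        simpa [h4, h232] using this
      have h56 : P 56 := by
        have := A 56 4 260 (by norm_num) (by norm_num) (by norm_num) (by norm_num)
        simpa [h4, h260] using this
      have h420 : P 420 := by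
        have := A 96 4 420 (by norm_num) (by norm_num) (by norm_num) (by norm_num)
        simpa [h4, h96] using this
      exact absurd (B 56 49 420 (by norm_num) (by norm_num) (by norm_num) (by norm_num)) (by simp [h49, h56, h420])

def col (n : ℕ) : Fin 2 :=
  if (3 ≤ n ∧ n ≤ 23) ∨ n = 26 ∨ (105 ≤ n ∧ n % 4 ≠ 0) ∨ 208 < n ∨ n = 200 ∨ n = 204 then 1 else 0



/-- `RR_4(9,4) = 432`: the least positive `N` such that every 2-coloring of
`{1,…,N}` admits a solution to `4x + 9y = z` monochromatic of color 0 or a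
solution to `4x + 4y = z` monochromatic of color 1 is `432`. -/
theorem RR_4_9_4 :
    IsLeast {N : ℕ | 0 < N ∧ ∀ χ : ℕ → Fin 2,
      (∃ x y z : ℕ, x ∈ Finset.Icc 1 N ∧ y ∈ Finset.Icc 1 N ∧
        z ∈ Finset.Icc 1 N ∧ 4 * x + 9 * y = z ∧ χ x = 0 ∧ χ y = 0 ∧ χ z = 0) ∨
      (∃ x y z : ℕ, x ∈ Finset.Icc 1 N ∧ y ∈ Finset.Icc 1 N ∧
        z ∈ Finset.Icc 1 N ∧ 4 * x + 4 * y = z ∧ χ x = 1 ∧ χ y = 1 ∧ χ z = 1)}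
      432 := by
  constructor
  · refine ⟨by norm_num, fun χ => ?_⟩
    by_contra hcon
    push Not at hcon
    obtain ⟨ha, hb⟩ := hcon
    have e : ∀ n, χ n ≠ 1 → χ n = 0 := fun n h => by omega
    refine upper_core (fun n => χ n = 1) ?_ ?_
    · rintro x y z hz hx hy hN ⟨h1, h2, h3⟩
      exact ha x y z (by simp; omega) (by simp; omega) (by simp; omega) hz (e _ h1) (e _ h2) (e _ h3)
    · rintro x y z hz hx hy hN ⟨h1, h2, h3⟩
      exact hb x y z (by simp; omega) (by simp; omega) (by simp; omega) hz h1 h2 h3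
  · rintro N ⟨hN, h⟩
    by_contra hlt
    rcases h col with ⟨x, y, z, hx, hy, hz, e, h1, h2, h3⟩ | ⟨x, y, z, hx, hy, hz, e, h1, h2, h3⟩
    all_goals
      simp only [Finset.mem_Icc] at hx hy hz
      simp only [col] at h1 h2 h3
      split_ifs at h1 h2 h3 <;> first | omega | (exfalso; simp_all; done) | skip
    have hy' : y = 1 ∨ y = 2 := by omega
    rcases hy' with rfl | rfl <;> omega
end

section
/- RR_5(11,5) = 820. That is, 820 is the least positive integer N such that every 2-coloring χ of {1,…,N} admits x, y, z ∈ {1,…,N} with 5x + 11y = z and χ(x) = χ(y) = χ(z) = 0, or x, y, z ∈ {1,…,N} with 5x + 5y = z and χ(x) = χ(y) = χ(z) = 1. -/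
theorem RR_upper_s17 (χ : ℕ → Fin 2)
    (A : ∀ x y z : ℕ, 1 ≤ x → 1 ≤ y → z ≤ 820 → 5 * x + 11 * y = z → ¬ (χ x = 0 ∧ χ y = 0 ∧ χ z = 0))
    (B : ∀ x y z : ℕ, 1 ≤ x → 1 ≤ y → z ≤ 820 → 5 * x + 5 * y = z → ¬ (χ x = 1 ∧ χ y = 1 ∧ χ z = 1)) :
    False := by
  have key : ∀ n, χ n = 0 ∨ χ n = 1 := by
    intro n
    generalize χ n = c
    revert c
    decide
  have n1 : χ 1 = 0 := by
    rcases key 1 with h | p1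
    · exact h
    exfalso
    have n10 : χ 10 = 0 := by
      have := B 1 1 10 (by norm_num) (by norm_num) (by norm_num) (by norm_num)
      clear A B
      grind
    have p160 : χ 160 = 1 := by
      have := A 10 10 160 (by norm_num) (by norm_num) (by norm_num) (by norm_num)
      clear A B
      grind
    have n31 : χ 31 = 0 := by
      have := B 1 31 160 (by norm_num) (by norm_num) (by norm_num) (by norm_num)
      clear A B
      grind
    have n805 : χ 805 = 0 := by
      have := B 160 1 805 (by norm_num) (by norm_num) (by norm_num) (by norm_num)
      clear A B
      grind
    have n16 : χ 16 = 0 := by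
      have := B 16 16 160 (by norm_num) (by norm_num) (by norm_num) (by norm_num)
      clear A B
      grind
    have p265 : χ 265 = 1 := by
      have := A 31 10 265 (by norm_num) (by norm_num) (by norm_num) (by norm_num)
      clear A B
      grind
    have p139 : χ 139 = 1 := by
      have := A 139 10 805 (by norm_num) (by norm_num) (by norm_num) (by norm_num)
      clear A B
      grind
    have p190 : χ 190 = 1 := by
      have := A 16 10 190 (by norm_num) (by norm_num) (by norm_num) (by norm_num)
      clear A B
      grind
    have n19 : χ 19 = 0 := by
      have := B 19 19 190 (by norm_num) (by norm_num) (by norm_num) (by norm_num)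
      clear A B
      grind
    have n700 : χ 700 = 0 := by
      have := B 1 139 700 (by norm_num) (by norm_num) (by norm_num) (by norm_num)
      clear A B
      grind
    have n52 : χ 52 = 0 := by
      have := B 52 1 265 (by norm_num) (by norm_num) (by norm_num) (by norm_num)
      clear A B
      grind
    have p205 : χ 205 = 1 := by
      have := A 19 10 205 (by norm_num) (by norm_num) (by norm_num) (by norm_num)
      clear A B
      grind
    have p40 : χ 40 = 1 := by
      have := A 52 40 700 (by norm_num) (by norm_num) (by norm_num) (by norm_num)
      clear A B
      grind
    have := B 40 1 205 (by norm_num) (by norm_num) (by norm_num) (by norm_num)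
    clear A B
    grind
  rcases key 3 with n3 | p3
  · exfalso
    have p16 : χ 16 = 1 := by
      have := A 1 1 16 (by norm_num) (by norm_num) (by norm_num) (by norm_num)
      clear A B
      grind
    have p48 : χ 48 = 1 := by
      have := A 3 3 48 (by norm_num) (by norm_num) (by norm_num) (by norm_num)
      clear A B
      grind
    have n320 : χ 320 = 0 := by
      have := B 16 48 320 (by norm_num) (by norm_num) (by norm_num) (by norm_num)
      clear A B
      grind
    have n160 : χ 160 = 0 := by
      have := B 16 16 160 (by norm_num) (by norm_num) (by norm_num) (by norm_num)
      clear A B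
      grind
    have p20 : χ 20 = 1 := by
      have := A 20 20 320 (by norm_num) (by norm_num) (by norm_num) (by norm_num)
      clear A B
      grind
    have p10 : χ 10 = 1 := by
      have := A 10 10 160 (by norm_num) (by norm_num) (by norm_num) (by norm_num)
      clear A B
      grind
    have n2 : χ 2 = 0 := by
      have := B 2 2 20 (by norm_num) (by norm_num) (by norm_num) (by norm_num)
      clear A B
      grind
    have n100 : χ 100 = 0 := by
      have := B 10 10 100 (by norm_num) (by norm_num) (by norm_num) (by norm_num)
      clear A B
      grind
    have p43 : χ 43 = 1 := by
      have := A 2 3 43 (by norm_num) (by norm_num) (by norm_num) (by norm_num)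
      clear A B
      grind
    have n455 : χ 455 = 0 := by
      have := B 48 43 455 (by norm_num) (by norm_num) (by norm_num) (by norm_num)
      clear A B
      grind
    have p40 : χ 40 = 1 := by
      have := A 3 40 455 (by norm_num) (by norm_num) (by norm_num) (by norm_num)
      clear A B
      grind
    have n4 : χ 4 = 0 := by
      have := B 4 4 40 (by norm_num) (by norm_num) (by norm_num) (by norm_num)
      clear A B
      grind
    have p53 : χ 53 = 1 := by
      have := A 4 3 53 (by norm_num) (by norm_num) (by norm_num) (by norm_num)
      clear A B
      grind
    have p59 : χ 59 = 1 := by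
      have := A 3 4 59 (by norm_num) (by norm_num) (by norm_num) (by norm_num)
      clear A B
      grind
    have n560 : χ 560 = 0 := by
      have := B 59 53 560 (by norm_num) (by norm_num) (by norm_num) (by norm_num)
      clear A B
      grind
    have p50 : χ 50 = 1 := by
      have := A 2 50 560 (by norm_num) (by norm_num) (by norm_num) (by norm_num)
      clear A B
      grind
    have n5 : χ 5 = 0 := by
      have := B 5 5 50 (by norm_num) (by norm_num) (by norm_num) (by norm_num)
      clear A B
      grind
    have p555 : χ 555 = 1 := by
      have := A 100 5 555 (by norm_num) (by norm_num) (by norm_num) (by norm_num)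
      clear A B
      grind
    have p101 : χ 101 = 1 := by
      have := A 101 5 560 (by norm_num) (by norm_num) (by norm_num) (by norm_num)
      clear A B
      grind
    have := B 10 101 555 (by norm_num) (by norm_num) (by norm_num) (by norm_num)
    clear A B
    grind
  · exfalso
    have p16 : χ 16 = 1 := by
      have := A 1 1 16 (by norm_num) (by norm_num) (by norm_num) (by norm_num)
      clear A B
      grind
    have n30 : χ 30 = 0 := by
      have := B 3 3 30 (by norm_num) (by norm_num) (by norm_num) (by norm_num)
      clear A B
      grind
    have p161 : χ 161 = 1 := by
      have := A 30 1 161 (by norm_num) (by norm_num) (by norm_num) (by norm_num)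
      clear A B
      grind
    have p480 : χ 480 = 1 := by
      have := A 30 30 480 (by norm_num) (by norm_num) (by norm_num) (by norm_num)
      clear A B
      grind
    have n820 : χ 820 = 0 := by
      have := B 161 3 820 (by norm_num) (by norm_num) (by norm_num) (by norm_num)
      clear A B
      grind
    have n48 : χ 48 = 0 := by
      have := B 48 48 480 (by norm_num) (by norm_num) (by norm_num) (by norm_num)
      clear A B
      grind
    have p570 : χ 570 = 1 := by
      have := A 48 30 570 (by norm_num) (by norm_num) (by norm_num) (by norm_num)
      clear A B
      grind
    have p98 : χ 98 = 1 := by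
      have := A 98 30 820 (by norm_num) (by norm_num) (by norm_num) (by norm_num)
      clear A B
      grind
    have := B 16 98 570 (by norm_num) (by norm_num) (by norm_num) (by norm_num)
    clear A B
    grind

/-- `RR_5(11,5) = 820`: the least positive `N` such that every 2-coloring of
`{1,…,N}` admits a solution to `5x + 11y = z` monochromatic of color 0 or a
solution to `5x + 5y = z` monochromatic of color 1 is `820`. -/
theorem RR_5_11_5 :
    IsLeast {N : ℕ | 0 < N ∧ ∀ χ : ℕ → Fin 2,
      (∃ x y z : ℕ, x ∈ Finset.Icc 1 N ∧ y ∈ Finset.Icc 1 N ∧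
        z ∈ Finset.Icc 1 N ∧ 5 * x + 11 * y = z ∧ χ x = 0 ∧ χ y = 0 ∧ χ z = 0) ∨
      (∃ x y z : ℕ, x ∈ Finset.Icc 1 N ∧ y ∈ Finset.Icc 1 N ∧
        z ∈ Finset.Icc 1 N ∧ 5 * x + 5 * y = z ∧ χ x = 1 ∧ χ y = 1 ∧ χ z = 1)}
      820 := by
  constructor
  · refine ⟨by norm_num, fun χ => ?_⟩
    by_contra hc
    push Not at hc
    obtain ⟨h0, h1⟩ := hc
    apply RR_upper_s17 χ
    · rintro x y z hx hy hz he ⟨a, b, c⟩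
      exact h0 x y z (by rw [Finset.mem_Icc]; omega) (by rw [Finset.mem_Icc]; omega)
        (by rw [Finset.mem_Icc]; omega) he a b c
    · rintro x y z hx hy hz he ⟨a, b, c⟩
      exact h1 x y z (by rw [Finset.mem_Icc]; omega) (by rw [Finset.mem_Icc]; omega)
        (by rw [Finset.mem_Icc]; omega) he a b c
  · rintro N ⟨hN, h⟩
    by_contra hlt
    rcases h (fun n => if (3 ≤ n ∧ n ≤ 29) ∨ n = 32 ∨ (161 ≤ n ∧ ¬ (n % 5 = 0 ∧ n ≤ 320))
        then 1 else 0) with ⟨x, y, z, hx, hy, hz, he, a, b, c⟩ | ⟨x, y, z, hx, hy, hz, he, a, b, c⟩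
    · simp only [Finset.mem_Icc] at hx hy hz
      simp only [ite_eq_right_iff, one_ne_zero, imp_false] at a b c
      have hx3 : x = 1 ∨ x = 2 ∨ 3 ≤ x := by omega
      have hy3 : y = 1 ∨ y = 2 ∨ 3 ≤ y := by omega
      rcases hx3 with h | h | h <;> rcases hy3 with h' | h' | h' <;> omega
    · simp only [Finset.mem_Icc] at hx hy hz
      simp only [ite_eq_left_iff, zero_ne_one, imp_false, not_not] at a b c
      omega
end

section
/- RR_2(10,9) = 282. That is, 282 is the least positive integer N such that every 2-coloring χ of {1,…,N} admits x, y, z ∈ {1,…,N} with 2x + 10y = z and χ(x) = χ(y) = χ(z) = 0, or x, y, z ∈ {1,…,N} with 2x + 9y = z and χ(x) = χ(y) = χ(z) = 1. -/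
/-- `RR_2(10,9) = 282`: the least positive `N` such that every 2-coloring of
`{1,…,N}` admits a solution to `2x + 10y = z` monochromatic of color 0 or a
solution to `2x + 9y = z` monochromatic of color 1 is `282`. -/
theorem RR_2_10_9 :
    IsLeast {N : ℕ | 0 < N ∧ ∀ χ : ℕ → Fin 2,
      (∃ x y z : ℕ, x ∈ Finset.Icc 1 N ∧ y ∈ Finset.Icc 1 N ∧
        z ∈ Finset.Icc 1 N ∧ 2 * x + 10 * y = z ∧ χ x = 0 ∧ χ y = 0 ∧ χ z = 0) ∨
      (∃ x y z : ℕ, x ∈ Finset.Icc 1 N ∧ y ∈ Finset.Icc 1 N ∧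
        z ∈ Finset.Icc 1 N ∧ 2 * x + 9 * y = z ∧ χ x = 1 ∧ χ y = 1 ∧ χ z = 1)}
      282 := by
  constructor
  · refine ⟨by norm_num, fun χ => ?_⟩
    by_contra hcon
    rw [not_or] at hcon
    obtain ⟨g0, g1⟩ := hcon
    have H0 : ∀ x y z : ℕ, ((1 ≤ x ∧ x ≤ 282) ∧ (1 ≤ y ∧ y ≤ 282) ∧ (1 ≤ z ∧ z ≤ 282) ∧
        2 * x + 10 * y = z) → χ x = 0 → χ y = 0 → χ z = 0 → False :=
      fun x y z h a b c => g0 ⟨x, y, z, Finset.mem_Icc.2 h.1, Finset.mem_Icc.2 h.2.1,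
        Finset.mem_Icc.2 h.2.2.1, h.2.2.2, a, b, c⟩
    have H1 : ∀ x y z : ℕ, ((1 ≤ x ∧ x ≤ 282) ∧ (1 ≤ y ∧ y ≤ 282) ∧ (1 ≤ z ∧ z ≤ 282) ∧
        2 * x + 9 * y = z) → χ x = 1 → χ y = 1 → χ z = 1 → False :=
      fun x y z h a b c => g1 ⟨x, y, z, Finset.mem_Icc.2 h.1, Finset.mem_Icc.2 h.2.1,
        Finset.mem_Icc.2 h.2.2.1, h.2.2.2, a, b, c⟩
    clear g0 g1
    have hc : ∀ n, χ n = 0 ∨ χ n = 1 := fun n => by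
      generalize χ n = a
      revert a
      decide
    have n0 : ∀ n, (χ n = 0 → False) → χ n = 1 := fun n h => (hc n).resolve_left h
    have n1 : ∀ n, (χ n = 1 → False) → χ n = 0 := fun n h => (hc n).resolve_right h
    rcases hc 1 with h1 | h1
    · have h12 : χ 12 = 1 := n0 _ fun h => H0 1 1 12 (by decide) h1 h1 h
      have h132 : χ 132 = 0 := n1 _ fun h => H1 12 12 132 (by decide) h12 h12 h
      have h274 : χ 274 = 1 := n0 _ fun h => H0 132 1 274 (by decide) h132 h1 h
      have h11 : χ 11 = 1 := n0 _ fun h => H0 11 11 132 (by decide) h h h132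
      have h28 : χ 28 = 0 := n1 _ fun h => H1 11 28 274 (by decide) h11 h h274
      have h121 : χ 121 = 0 := n1 _ fun h => H1 11 11 121 (by decide) h11 h11 h
      have h66 : χ 66 = 1 := n0 _ fun h => H0 28 1 66 (by decide) h28 h1 h
      have h252 : χ 252 = 1 := n0 _ fun h => H0 121 1 252 (by decide) h121 h1 h
      have h6 : χ 6 = 0 := n1 _ fun h => H1 6 6 66 (by decide) h h h66
      have h72 : χ 72 = 0 := n1 _ fun h => H1 72 12 252 (by decide) h h12 h252
      exact H0 6 6 72 (by decide) h6 h6 h72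
    · have h11 : χ 11 = 0 := n1 _ fun h => H1 1 1 11 (by decide) h1 h1 h
      have h132 : χ 132 = 1 := n0 _ fun h => H0 11 11 132 (by decide) h11 h11 h
      have h12 : χ 12 = 0 := n1 _ fun h => H1 12 12 132 (by decide) h h h132
      have h134 : χ 134 = 1 := n0 _ fun h => H0 12 11 134 (by decide) h12 h11 h
      have h144 : χ 144 = 1 := n0 _ fun h => H0 12 12 144 (by decide) h12 h12 h
      have h142 : χ 142 = 1 := n0 _ fun h => H0 11 12 142 (by decide) h11 h12 h
      rcases hc 2 with h2 | h2
      · have h24 : χ 24 = 1 := n0 _ fun h => H0 2 2 24 (by decide) h2 h2 h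
        have h44 : χ 44 = 1 := n0 _ fun h => H0 12 2 44 (by decide) h12 h2 h
        have h42 : χ 42 = 1 := n0 _ fun h => H0 11 2 42 (by decide) h11 h2 h
        have h57 : χ 57 = 0 := n1 _ fun h => H1 24 1 57 (by decide) h24 h1 h
        have h264 : χ 264 = 0 := n1 _ fun h => H1 24 24 264 (by decide) h24 h24 h
        have h6 : χ 6 = 0 := n1 _ fun h => H1 44 6 142 (by decide) h44 h h142
        have h93 : χ 93 = 0 := n1 _ fun h => H1 42 1 93 (by decide) h42 h1 h
        have h15 : χ 15 = 1 := n0 _ fun h => H0 57 15 264 (by decide) h57 h h264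
        have h246 : χ 246 = 1 := n0 _ fun h => H0 93 6 246 (by decide) h93 h6 h
        exact H1 15 24 246 (by decide) h15 h24 h246
      · have h58 : χ 58 = 0 := n1 _ fun h => H1 58 2 134 (by decide) h h2 h134
        have h282 : χ 282 = 0 := n1 _ fun h => H1 132 2 282 (by decide) h132 h2 h
        have h236 : χ 236 = 1 := n0 _ fun h => H0 58 12 236 (by decide) h58 h12 h
        have h26 : χ 26 = 1 := n0 _ fun h => H0 11 26 282 (by decide) h11 h h282
        exact H1 1 26 236 (by decide) h1 h26 h236
  · rintro N ⟨hN, h⟩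
    by_contra hlt
    rcases h (fun n => if n ≤ 10 ∨ (132 ≤ n ∧ n % 2 = 0) then 1 else 0) with
      ⟨x, y, z, hx, hy, hz, e, a, b, c⟩ | ⟨x, y, z, hx, hy, hz, e, a, b, c⟩
    · rw [Finset.mem_Icc] at hx hy hz
      simp at a b c
      omega
    · rw [Finset.mem_Icc] at hx hy hz
      simp at a b c
      omega
end

section
/- RR_3(10,9) = 477. That is, 477 is the least positive integer N such that every 2-coloring χ of {1,…,N} admits x, y, z ∈ {1,…,N} with 3x + 10y = z and χ(x) = χ(y) = χ(z) = 0, or x, y, z ∈ {1,…,N} with 3x + 9y = z and χ(x) = χ(y) = χ(z) = 1. -/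
theorem RR_aux_s19 (p : ℕ → Prop)
    (h0 : ∀ x y, 1 ≤ x → 1 ≤ y → 3 * x + 10 * y ≤ 477 → ¬ (p x ∧ p y ∧ p (3 * x + 10 * y)))
    (h1 : ∀ x y, 1 ≤ x → 1 ≤ y → 3 * x + 9 * y ≤ 477 →
      ¬ (¬ p x ∧ ¬ p y ∧ ¬ p (3 * x + 9 * y))) : False := by
  have b1 : p 1 := by
    by_contra a1
    have b12 : p 12 := by have := h1 1 1; grind
    have a156 : ¬ p 156 := by have := h0 12 12; grind
    have b49 : p 49 := by have := h1 49 1; grind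
    have b477 : p 477 := by have := h1 156 1; grind
    have a33 : ¬ p 33 := by have := h0 49 33; grind
    have a267 : ¬ p 267 := by have := h0 49 12; grind
    have b86 : p 86 := by have := h1 86 1; grind
    have a5 : ¬ p 5 := by have := h0 12 5; grind
    have b8 : p 8 := by have := h1 8 1; grind
    have a2 : ¬ p 2 := by have := h0 2 8; grind
    have := h1 5 2; grind
  by_cases b2 : p 2
  · have a26 : ¬ p 26 := by have := h0 2 2; grind
    have a23 : ¬ p 23 := by have := h0 1 2; grind
    have b303 : p 303 := by have := h1 23 26; grind
    have a30 : ¬ p 30 := by have := h0 1 30; grind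
    have a13 : ¬ p 13 := by have := h0 1 1; grind
    have b273 : p 273 := by have := h1 13 26; grind
    have a27 : ¬ p 27 := by have := h0 1 27; grind
    have b333 : p 333 := by have := h1 30 27; grind
    have a33 : ¬ p 33 := by have := h0 1 33; grind
    have b366 : p 366 := by have := h1 23 33; grind
    have a36 : ¬ p 36 := by have := h0 2 36; grind
    have b3 : p 3 := by have := h1 3 3; grind
    have b156 : p 156 := by have := h1 13 13; grind
    have a12 : ¬ p 12 := by have := h0 12 12; grind
    have b147 : p 147 := by have := h1 13 12; grind
    have a471 : ¬ p 471 := by have := h0 147 3; grind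
    have b393 : p 393 := by have := h1 23 36; grind
    have a121 : ¬ p 121 := by have := h0 121 3; grind
    have := h1 121 12; grind
  · have a2 := b2
    have b24 : p 24 := by have := h1 2 2; grind
    have a312 : ¬ p 312 := by have := h0 24 24; grind
    have b26 : p 26 := by have := h1 26 26; grind
    have a318 : ¬ p 318 := by have := h0 26 24; grind
    have a82 : ¬ p 82 := by have := h0 24 1; grind
    have b34 : p 34 := by have := h1 2 34; grind
    have a8 : ¬ p 8 := by have := h0 8 1; grind
    have := h1 82 8; grind

/-- `RR_3(10,9) = 477`: the least positive `N` such that every 2-coloring of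
`{1,…,N}` admits a solution to `3x + 10y = z` monochromatic of color 0 or a
solution to `3x + 9y = z` monochromatic of color 1 is `477`. -/
theorem RR_3_10_9 :
    IsLeast {N : ℕ | 0 < N ∧ ∀ χ : ℕ → Fin 2,
      (∃ x y z : ℕ, x ∈ Finset.Icc 1 N ∧ y ∈ Finset.Icc 1 N ∧
        z ∈ Finset.Icc 1 N ∧ 3 * x + 10 * y = z ∧ χ x = 0 ∧ χ y = 0 ∧ χ z = 0) ∨
      (∃ x y z : ℕ, x ∈ Finset.Icc 1 N ∧ y ∈ Finset.Icc 1 N ∧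
        z ∈ Finset.Icc 1 N ∧ 3 * x + 9 * y = z ∧ χ x = 1 ∧ χ y = 1 ∧ χ z = 1)}
      477 := by
  constructor
  · refine ⟨by norm_num, fun χ => ?_⟩
    by_contra hc
    push Not at hc
    obtain ⟨c0, c1⟩ := hc
    have e : ∀ n, ¬ χ n = 0 → χ n = 1 := fun n h => by omega
    refine RR_aux_s19 (fun n => χ n = 0) ?_ ?_
    · rintro x y hx hy h ⟨u, v, w⟩
      exact c0 x y _ (by simp; omega) (by simp; omega) (by simp; omega) rfl u v w
    · rintro x y hx hy h ⟨u, v, w⟩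
      exact c1 x y _ (by simp; omega) (by simp; omega) (by simp; omega) rfl
        (e _ u) (e _ v) (e _ w)
  · rintro N ⟨_, h⟩
    by_contra hlt
    rcases h (fun n => if 12 ≤ n ∧ n ≤ 155 then 0 else 1) with
      ⟨x, y, z, hx, hy, hz, e, a, b, c⟩ | ⟨x, y, z, hx, hy, hz, e, a, b, c⟩
    · simp at a b c hx hy hz
      omega
    · simp at a b c hx hy hz
      omega
end
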